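/- Let (F₁,F₂) be a nonsingular pair of quadratic forms in s variables with integer coefficients. (i) If s ≥ 7, then the singular series converges absolutely: Σ_{q=1}^∞ q^{−s} |D_q(0)| < ∞. (ii) If s ≥ 6 and w ∈ C_c^∞(ℝ^s), then the singular integral converges absolutely: with J(α) = ∫_{ℝ^s} w(x) e(α₁F₁(x) + α₂F₂(x)) dx for α ∈ ℝ², one has ∫_{ℝ²} |J(α)| dα < ∞. -/

import Mathlib

open MeasureTheory Real Matrix Finset

noncomputable section

/-- `e(x) = exp(2πix)`. -/
def e2pi (x : ℝ) : ℂ := Complex.exp (2 * Real.pi * Complex.I * x)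

/-- Euclidean norm on `ℝ²`. -/
def nrm2 (x : ℝ × ℝ) : ℝ := Real.sqrt (x.1 ^ 2 + x.2 ^ 2)

/-- Dot product on `ℝ²`. -/
def dot2 (x y : ℝ × ℝ) : ℝ := x.1 * y.1 + x.2 * y.2

/-- `x^⊥ = (x₂, -x₁)`. -/
def perp2 (x : ℝ × ℝ) : ℝ × ℝ := (x.2, -x.1)

/-- `δ_n` for `n ∈ ℤ²`. -/
def deltaInt (n : ℤ × ℤ) : ℂ := if n = 0 then 1 else 0

/-- `h(y,z) = Σ_{j ≥ 1} (1/(yj)) (ω(yj) − ω(|z|/(yj)))`. -/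
def hFun (ω : ℝ → ℝ) (y z : ℝ) : ℝ :=
  ∑' j : ℕ+, (1 / (y * ((j : ℕ) : ℝ))) *
    (ω (y * ((j : ℕ) : ℝ)) - ω (|z| / (y * ((j : ℕ) : ℝ))))

/-- `c = (∫_{ℝ²} ω(|x|) dx)⁻¹`. -/
def cConst (ω : ℝ → ℝ) : ℝ := (∫ x : ℝ × ℝ, ω (nrm2 x))⁻¹

/-- The function `p_{1,q}`. -/
def p1 (ω ω₀ : ℝ → ℝ) (Q : ℝ) (q : ℕ) (w : ℝ × ℝ) : ℂ :=
  -(cConst ω / Q : ℝ) * ∫ x : ℝ × ℝ,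
    (((ω₀ (nrm2 x / Q ^ ((3 : ℝ) / 2)) *
      ∑' j : ℕ+, (1 / ((q : ℝ) * ((j : ℕ) : ℝ)) ^ 2) *
        ω (nrm2 x / (((j : ℕ) : ℝ) * (q : ℝ) * Q ^ ((1 : ℝ) / 2)))) : ℝ) : ℂ) *
      e2pi (-(dot2 w x))

/-- The function `p_{2,r,k,q}` (with `q` allowed to be a real parameter). -/
def p2 (ω ω₀ : ℝ → ℝ) (Q : ℝ) (r : ℤ × ℤ) (k : ℕ) (q : ℝ) (w : ℝ × ℝ) : ℂ :=
  ((cConst ω / Q ^ 3 : ℝ) : ℂ) * ∫ x : ℝ × ℝ,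
    (((ω₀ (nrm2 x / Q ^ ((3 : ℝ) / 2)) *
      hFun ω ((k : ℝ) * q / Q) (((r.1 : ℝ) * x.1 + (r.2 : ℝ) * x.2) / Q ^ 2)) : ℝ) : ℂ) *
      e2pi (-(dot2 w x))

/-- The lattice `Λ(a,q) = {k a + q y}` as a subset of `ℤ²`. -/
def Lambda (a : ℤ × ℤ) (q : ℕ) : Set (ℤ × ℤ) :=
  {v | ∃ k : ℤ, ∃ y : ℤ × ℤ, v = (k * a.1 + (q : ℤ) * y.1, k * a.2 + (q : ℤ) * y.2)}

/-- `k(r) = gcd(r₁,r₂)/gcd(gcd(r₁,r₂),q)`. -/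
def kOf (r : ℤ × ℤ) (q : ℕ) : ℕ := Int.gcd r.1 r.2 / Nat.gcd (Int.gcd r.1 r.2) q

/-- The function `p_{Λ(a,q)}`. -/
def pLambda (ω ω₀ : ℝ → ℝ) (Q : ℝ) (q : ℕ) (a : ℤ × ℤ) (w : ℝ × ℝ) : ℂ :=
  p1 ω ω₀ Q q w +
    ∑' r : ℤ × ℤ,
      Set.indicator {r : ℤ × ℤ | r ∈ Lambda a q ∧ r ≠ 0}
        (fun r => ((ω (nrm2 ((r.1 : ℝ), (r.2 : ℝ)) / Q ^ ((1 : ℝ) / 2)) : ℝ) : ℂ) *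
          p2 ω ω₀ Q r (kOf r q) (q : ℝ) w) r

/-- Reduced residues `a mod q` (canonical representatives) with `gcd(a₁,a₂,q)=1`. -/
def residues (q : ℕ) : Finset (ℕ × ℕ) :=
  ((Finset.range q) ×ˢ (Finset.range q)).filter (fun a => Nat.gcd (Nat.gcd a.1 a.2) q = 1)

/-- Normalized directional derivative along `ξ`. -/
def dirDeriv (ξ : ℝ × ℝ) (f : ℝ × ℝ → ℂ) : ℝ × ℝ → ℂ :=
  fun w => fderiv ℝ f w (ξ.1 / nrm2 ξ, ξ.2 / nrm2 ξ)

/-- Fourier transform `ω̂₀(t) = ∫ ω₀(x) e(−xt) dx`. -/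
def fourierW0 (ω₀ : ℝ → ℝ) (t : ℝ) : ℂ := ∫ x : ℝ, ((ω₀ x : ℝ) : ℂ) * e2pi (-(x * t))

/-- `|M(w)x|` for the 3×2 matrix `M(w)`. -/
def Mnorm (Q : ℝ) (w : ℝ × ℝ) (x : ℝ × ℝ) : ℝ :=
  Real.sqrt (x.1 ^ 2 / Q + x.2 ^ 2 / Q + Q ^ 2 * (w.1 * x.2 - w.2 * x.1) ^ 2)

/-- `μ_{M(w)}(Λ(a,q))`: infimum of `|M(w)x|` over nonzero lattice points. -/
def muM (Q : ℝ) (w : ℝ × ℝ) (a : ℤ × ℤ) (q : ℕ) : ℝ :=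
  sInf {t : ℝ | ∃ v : ℤ × ℤ, v ∈ Lambda a q ∧ v ≠ 0 ∧ t = Mnorm Q w ((v.1 : ℝ), (v.2 : ℝ))}

/-- Quadratic form attached to an integer matrix, over any commutative ring. -/
def quadEval {s : ℕ} {R : Type*} [CommRing R] (M : Matrix (Fin s) (Fin s) ℤ)
    (x : Fin s → R) : R :=
  ∑ i, ∑ j, (M i j : R) * x i * x j

/-- `e_q(n) = exp(2πin/q)` for an integer `n`. -/
def eqc (q : ℕ) (n : ℤ) : ℂ := e2pi ((n : ℝ) / (q : ℝ))

/-- The exponential sum `D_q(u)`. -/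
def Dq (s : ℕ) (M₁ M₂ : Matrix (Fin s) (Fin s) ℤ) (q : ℕ) (u : Fin s → ℤ) : ℂ :=
  ∑ a ∈ residues q, ∑ b ∈ Fintype.piFinset (fun _ : Fin s => Finset.range q),
    eqc q ((a.1 : ℤ) * quadEval M₁ (fun i => (b i : ℤ)) +
      (a.2 : ℤ) * quadEval M₂ (fun i => (b i : ℤ)) + ∑ i, (b i : ℤ) * u i)

/-- The exponential sum `S_{q,dc}(u)`. -/
def Sq (s : ℕ) (M₁ M₂ : Matrix (Fin s) (Fin s) ℤ) (q d : ℕ) (c : ℤ × ℤ)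
    (u : Fin s → ℤ) : ℂ :=
  ∑ a ∈ (residues q).filter
      (fun a => (q : ℤ) ∣ (d : ℤ) * (c.1 * (a.2 : ℤ) - c.2 * (a.1 : ℤ))),
    ∑ b ∈ Fintype.piFinset (fun _ : Fin s => Finset.range q),
      eqc q ((a.1 : ℤ) * quadEval M₁ (fun i => (b i : ℤ)) +
        (a.2 : ℤ) * quadEval M₂ (fun i => (b i : ℤ)) + ∑ i, (b i : ℤ) * u i)

/-- The pair of quadratic forms given by `M₁, M₂` is nonsingular: at every nonzero
complex common zero the gradients (equivalently `M₁x`, `M₂x`) are linearly independent. -/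
def NonsingularPair (s : ℕ) (M₁ M₂ : Matrix (Fin s) (Fin s) ℤ) : Prop :=
  ∀ x : Fin s → ℂ, x ≠ 0 →
    quadEval M₁ x = 0 → quadEval M₂ x = 0 →
    LinearIndependent ℂ
      ![(M₁.map (fun z : ℤ => (z : ℂ))).mulVec x, (M₂.map (fun z : ℤ => (z : ℂ))).mulVec x]

/-- Euclidean norm on `Fin m → ℝ`. -/
def enorm' {m : ℕ} (v : Fin m → ℝ) : ℝ := Real.sqrt (∑ i, v i ^ 2)

end

theorem Matrix.exists_isotropic_mem_ker_of_adjugate_eq_zero {n : Type*} [Fintype n] [DecidableEq n]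
    [Nonempty n] {A : Matrix n n ℂ} (hA : A.IsSymm) (h : A.adjugate = 0) (B : Matrix n n ℂ) :
    ∃ z : n → ℂ, z ≠ 0 ∧ A *ᵥ z = 0 ∧ z ⬝ᵥ B *ᵥ z = 0 := by
  have hdet : A.det = 0 := by
    have h1 := Matrix.mul_adjugate A
    rw [h, mul_zero] at h1
    have h2 := congrFun (congrFun h1 (Classical.arbitrary n)) (Classical.arbitrary n)
    simpa using h2.symm
  obtain ⟨x, hx0, hx⟩ := Matrix.exists_mulVec_eq_zero_iff.mpr hdet
  obtain ⟨k, hk⟩ := Function.ne_iff.mp hx0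
  have hkk : (A.updateRow k (Pi.single k 1)).det = 0 := by
    rw [← Matrix.adjugate_apply, h]; rfl
  obtain ⟨y, hy0, hy⟩ := Matrix.exists_mulVec_eq_zero_iff.mpr hkk
  have hyk : y k = 0 := by
    have := congrFun hy k
    simpa [Matrix.mulVec, Matrix.updateRow_self] using this
  have hyi : ∀ i, i ≠ k → (A *ᵥ y) i = 0 := by
    intro i hi
    have := congrFun hy i
    simpa [Matrix.mulVec, Matrix.updateRow_ne hi] using this
  have hxAy : x ⬝ᵥ A *ᵥ y = 0 := by
    rw [Matrix.dotProduct_mulVec, ← Matrix.mulVec_transpose, hA.eq, hx, zero_dotProduct]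
  have hAy : A *ᵥ y = 0 := by
    funext i
    by_cases hi : i = k
    · subst hi
      rw [dotProduct, Finset.sum_eq_single i (fun j _ hj => by rw [hyi j hj, mul_zero])
        (by simp)] at hxAy
      exact (mul_eq_zero.mp hxAy).resolve_left hk
    · exact hyi i hi
  by_cases hyy : y ⬝ᵥ B *ᵥ y = 0
  · exact ⟨y, hy0, hAy, hyy⟩
  · obtain ⟨r, hr⟩ := IsAlgClosed.exists_pow_nat_eq
      (discrim (y ⬝ᵥ B *ᵥ y) (x ⬝ᵥ B *ᵥ y + y ⬝ᵥ B *ᵥ x) (x ⬝ᵥ B *ᵥ x)) (n := 2) (by norm_num)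
    obtain ⟨τ, hτ⟩ := exists_quadratic_eq_zero hyy ⟨r, by rw [← hr, sq]⟩
    refine ⟨x + τ • y, ?_, ?_, ?_⟩
    · intro h0
      have := congrFun h0 k
      simp [hyk] at this
      exact hk this
    · rw [Matrix.mulVec_add, Matrix.mulVec_smul, hx, hAy]; simp
    · simp only [Matrix.mulVec_add, Matrix.mulVec_smul, dotProduct_add, add_dotProduct,
        dotProduct_smul, smul_dotProduct, smul_eq_mul]
      linear_combination hτ

theorem quadEval_eq_dotProduct {s : ℕ} {R : Type*} [CommRing R] (M : Matrix (Fin s) (Fin s) ℤ)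
    (x : Fin s → R) : quadEval M x = x ⬝ᵥ (M.map (fun z : ℤ => (z : R))) *ᵥ x := by
  simp only [quadEval, dotProduct, Matrix.mulVec, Matrix.map_apply, Finset.mul_sum]
  exact Finset.sum_congr rfl fun i _ => Finset.sum_congr rfl fun j _ => by ring

/-- The matrix `a₁M₁ + a₂M₂` over a commutative ring. -/
def pencil {s : ℕ} {R : Type*} [CommRing R] (M₁ M₂ : Matrix (Fin s) (Fin s) ℤ) (a₁ a₂ : R) :
    Matrix (Fin s) (Fin s) R :=
  a₁ • M₁.map (fun z : ℤ => (z : R)) + a₂ • M₂.map (fun z : ℤ => (z : R))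

section Pencil

variable {s : ℕ} {R S : Type*} [CommRing R] [CommRing S] {M₁ M₂ : Matrix (Fin s) (Fin s) ℤ}

theorem pencil_isSymm (hM₁ : M₁.IsSymm) (hM₂ : M₂.IsSymm) (a₁ a₂ : R) :
    (pencil M₁ M₂ a₁ a₂).IsSymm :=
  ((hM₁.map _).smul a₁).add ((hM₂.map _).smul a₂)

theorem pencil_map (f : R →+* S) (a₁ a₂ : R) :
    (pencil M₁ M₂ a₁ a₂).map f = pencil M₁ M₂ (f a₁) (f a₂) := by
  ext i j
  simp [pencil]

theorem pencil_adjugate_map (f : R →+* S) (a₁ a₂ : R) (i j : Fin s) :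
    f ((pencil M₁ M₂ a₁ a₂).adjugate i j) = (pencil M₁ M₂ (f a₁) (f a₂)).adjugate i j := by
  rw [← pencil_map, ← RingHom.mapMatrix_apply, ← RingHom.map_adjugate]
  rfl

theorem dotProduct_pencil_mulVec (a₁ a₂ : R) (x : Fin s → R) :
    x ⬝ᵥ pencil M₁ M₂ a₁ a₂ *ᵥ x = a₁ * quadEval M₁ x + a₂ * quadEval M₂ x := by
  simp [pencil, quadEval_eq_dotProduct, Matrix.add_mulVec, Matrix.smul_mulVec]

theorem NonsingularPair.eq_zero_of_pencil_mulVec_eq_zero (hns : NonsingularPair s M₁ M₂)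
    {a₁ a₂ : ℂ} (ha : a₁ ≠ 0 ∨ a₂ ≠ 0) {x : Fin s → ℂ} (hx : pencil M₁ M₂ a₁ a₂ *ᵥ x = 0)
    (h₁ : quadEval M₁ x = 0) (h₂ : quadEval M₂ x = 0) : x = 0 := by
  by_contra hx0
  have h := LinearIndependent.pair_iff.mp (hns x hx0 h₁ h₂) a₁ a₂ (by
    rw [← Matrix.smul_mulVec, ← Matrix.smul_mulVec, ← Matrix.add_mulVec]; exact hx)
  rcases ha with ha | ha
  · exact ha h.1
  · exact ha h.2

theorem NonsingularPair.pencil_adjugate_ne_zero (hns : NonsingularPair s M₁ M₂)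
    (hM₁ : M₁.IsSymm) (hM₂ : M₂.IsSymm) [NeZero s] {a₁ a₂ : ℂ} (ha : a₁ ≠ 0 ∨ a₂ ≠ 0) :
    (pencil M₁ M₂ a₁ a₂).adjugate ≠ 0 := by
  intro h
  have key := Matrix.exists_isotropic_mem_ker_of_adjugate_eq_zero
    (pencil_isSymm hM₁ hM₂ a₁ a₂) h
  rcases ha with ha | ha
  · obtain ⟨z, hz0, hz, hB⟩ := key (M₂.map (fun z : ℤ => (z : ℂ)))
    rw [← quadEval_eq_dotProduct] at hB
    have h1 := dotProduct_pencil_mulVec (M₁ := M₁) (M₂ := M₂) a₁ a₂ z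
    rw [hz, dotProduct_zero, hB, mul_zero, add_zero] at h1
    exact hz0 (hns.eq_zero_of_pencil_mulVec_eq_zero (.inl ha) hz
      ((mul_eq_zero.mp h1.symm).resolve_left ha) hB)
  · obtain ⟨z, hz0, hz, hB⟩ := key (M₁.map (fun z : ℤ => (z : ℂ)))
    rw [← quadEval_eq_dotProduct] at hB
    have h1 := dotProduct_pencil_mulVec (M₁ := M₁) (M₂ := M₂) a₁ a₂ z
    rw [hz, dotProduct_zero, hB, mul_zero, zero_add] at h1
    exact hz0 (hns.eq_zero_of_pencil_mulVec_eq_zero (.inr ha) hz hB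
      ((mul_eq_zero.mp h1.symm).resolve_left ha))

end Pencil

section PencilDet

variable {s : ℕ} {M₁ M₂ : Matrix (Fin s) (Fin s) ℤ}

open Polynomial in
theorem NonsingularPair.pencil_det_polynomial_ne_zero (hns : NonsingularPair s M₁ M₂)
    (hM₁ : M₁.IsSymm) (hM₂ : M₂.IsSymm) :
    (pencil M₁ M₂ (1 : ℂ[X]) X).det ≠ 0 := by
  intro h
  obtain ⟨x, hx0, hx⟩ := Matrix.exists_mulVec_eq_zero_iff.mpr h
  have hd : (M₂.map (fun z : ℤ => (z : ℂ[X]))) *ᵥ x +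
      pencil M₁ M₂ (1 : ℂ[X]) X *ᵥ (fun i => derivative (x i)) = 0 := by
    funext i
    have h1 := congrArg derivative (congrFun hx i)
    simp only [Matrix.mulVec, dotProduct, Pi.zero_apply, derivative_zero, derivative_sum,
      derivative_mul, pencil, Matrix.add_apply, Matrix.smul_apply, Matrix.map_apply,
      smul_eq_mul, derivative_add, derivative_intCast, derivative_X, derivative_one] at h1
    rw [Pi.zero_apply, ← h1]
    simp only [Matrix.mulVec, dotProduct, Pi.add_apply, pencil, Matrix.add_apply,
      Matrix.smul_apply, Matrix.map_apply, smul_eq_mul, ← Finset.sum_add_distrib]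
    exact Finset.sum_congr rfl fun j _ => by ring
  have hx2 : quadEval M₂ x = 0 := by
    have h1 := congrArg (fun v => x ⬝ᵥ v) hd
    simp only [dotProduct_add, dotProduct_zero] at h1
    rw [Matrix.dotProduct_mulVec x (pencil M₁ M₂ _ _), ← Matrix.mulVec_transpose,
      (pencil_isSymm hM₁ hM₂ _ _).eq, hx, zero_dotProduct, add_zero,
      ← quadEval_eq_dotProduct] at h1
    exact h1
  have hx1 : quadEval M₁ x = 0 := by
    have h1 := dotProduct_pencil_mulVec (M₁ := M₁) (M₂ := M₂) (1 : ℂ[X]) X x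
    rw [hx, dotProduct_zero, hx2, mul_zero, add_zero, one_mul] at h1
    exact h1.symm
  obtain ⟨k, hk⟩ := Function.ne_iff.mp hx0
  obtain ⟨t, ht⟩ : ∃ t : ℂ, (x k).eval t ≠ 0 := by
    by_contra! hcon
    exact hk (Polynomial.funext fun r => by simpa using hcon r)
  have hmap : ∀ M : Matrix (Fin s) (Fin s) ℤ, quadEval M x = 0 →
      quadEval M (fun i => (x i).eval t) = 0 := by
    intro M hM
    have h1 := congrArg (eval t) hM
    simpa [quadEval, eval_finsetSum] using h1
  have hz : pencil M₁ M₂ (1 : ℂ) t *ᵥ (fun i => (x i).eval t) = 0 := by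
    funext i
    have h1 := congrArg (eval t) (congrFun hx i)
    simpa [Matrix.mulVec, dotProduct, pencil, eval_finsetSum] using h1
  exact ht (congrFun (hns.eq_zero_of_pencil_mulVec_eq_zero (.inl one_ne_zero) hz
    (hmap M₁ hx1) (hmap M₂ hx2)) k)

open Polynomial in
theorem NonsingularPair.exists_pencil_det_ne_zero (hns : NonsingularPair s M₁ M₂)
    (hM₁ : M₁.IsSymm) (hM₂ : M₂.IsSymm) : ∃ t : ℤ, (pencil M₁ M₂ (1 : ℤ) t).det ≠ 0 := by
  by_contra! hcon
  refine hns.pencil_det_polynomial_ne_zero hM₁ hM₂ (Polynomial.eq_zero_of_infinite_isRoot _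
    (Set.Infinite.mono ?_ (Set.infinite_range_of_injective (Int.cast_injective (α := ℂ)))))
  rintro _ ⟨t, rfl⟩
  have h1 := congrArg (Int.castRingHom ℂ) (hcon t)
  rw [RingHom.map_det, RingHom.mapMatrix_apply, pencil_map] at h1
  change eval (t : ℂ) _ = 0
  rw [← Polynomial.coe_evalRingHom, RingHom.map_det, RingHom.mapMatrix_apply, pencil_map]
  simpa using h1

/-- A positive integer lying in every ideal generated by the `(s-1)`-minors of `a₁M₁ + a₂M₂`
with `a₁, a₂` coprime. -/
theorem NonsingularPair.exists_adjugate_combination (hns : NonsingularPair s M₁ M₂)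
    (hM₁ : M₁.IsSymm) (hM₂ : M₂.IsSymm) [NeZero s] :
    ∃ D : ℕ, 0 < D ∧ ∀ (R : Type) [CommRing R] (a₁ a₂ : R), IsCoprime a₁ a₂ →
      ∃ c : Fin s × Fin s → R,
        ∑ k, c k * (pencil M₁ M₂ a₁ a₂).adjugate k.1 k.2 = (D : R) := by
  let A : Matrix (Fin s) (Fin s) (MvPolynomial (Fin 2) ℤ) :=
    pencil M₁ M₂ (MvPolynomial.X 0) (MvPolynomial.X 1)
  let P : Fin s × Fin s → MvPolynomial (Fin 2) ℤ := fun k => A.adjugate k.1 k.2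
  let I : Ideal (MvPolynomial (Fin 2) ℤ) := Ideal.span (Set.range P)
  let _ : Algebra (MvPolynomial (Fin 2) ℤ) (MvPolynomial (Fin 2) ℚ) :=
    MvPolynomial.algebraMvPolynomial
  have halg : algebraMap (MvPolynomial (Fin 2) ℤ) (MvPolynomial (Fin 2) ℚ) =
      MvPolynomial.map (Int.castRingHom ℚ) := rfl
  have hzero : ∀ x ∈ MvPolynomial.zeroLocus ℂ
      (I.map (algebraMap (MvPolynomial (Fin 2) ℤ) (MvPolynomial (Fin 2) ℚ))), x = 0 := by
    intro x hx
    by_contra hx0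
    have hne : x 0 ≠ 0 ∨ x 1 ≠ 0 := by
      by_contra! hcon
      exact hx0 (by funext i; fin_cases i; exacts [hcon.1, hcon.2])
    apply hns.pencil_adjugate_ne_zero hM₁ hM₂ hne
    ext i j
    have h1 := hx _ (Ideal.mem_map_of_mem _ (Ideal.subset_span ⟨(i, j), rfl⟩))
    have h2 := pencil_adjugate_map (M₁ := M₁) (M₂ := M₂)
      (((MvPolynomial.aeval x : MvPolynomial (Fin 2) ℚ →ₐ[ℚ] ℂ) : _ →+* ℂ).comp
        (algebraMap (MvPolynomial (Fin 2) ℤ) (MvPolynomial (Fin 2) ℚ)))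
        (MvPolynomial.X 0) (MvPolynomial.X 1) i j
    simp only [RingHom.comp_apply] at h2
    have h3 : ∀ l, algebraMap (MvPolynomial (Fin 2) ℤ) (MvPolynomial (Fin 2) ℚ)
        (MvPolynomial.X l) = MvPolynomial.X l := by
      intro l
      rw [halg, MvPolynomial.map_X]
    simp only [h3, RingHom.coe_coe, MvPolynomial.aeval_X] at h2
    rw [← h2]
    exact h1
  have hpow : ∀ i : Fin 2, ∃ (n : ℕ) (D : ℕ), 0 < D ∧
      (D : MvPolynomial (Fin 2) ℤ) * MvPolynomial.X i ^ n ∈ I := by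
    intro i
    have h1 : (MvPolynomial.X i : MvPolynomial (Fin 2) ℚ) ∈
        (I.map (algebraMap (MvPolynomial (Fin 2) ℤ) (MvPolynomial (Fin 2) ℚ))).radical := by
      rw [← MvPolynomial.vanishingIdeal_zeroLocus_eq_radical (K := ℂ)]
      intro x hx
      rw [hzero x hx]
      simp
    obtain ⟨n, hn⟩ := h1
    rw [IsLocalization.mem_map_algebraMap_iff
      ((nonZeroDivisors ℤ).map (MvPolynomial.C (σ := Fin 2) (R := ℤ)))
      (MvPolynomial (Fin 2) ℚ)] at hn
    obtain ⟨⟨p, ⟨_, ⟨d, hd, rfl⟩⟩⟩, hp⟩ := hn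
    have hd0 : d ≠ 0 := nonZeroDivisors.ne_zero hd
    refine ⟨n, d.natAbs, Int.natAbs_pos.mpr hd0, ?_⟩
    have hinj : Function.Injective
        (algebraMap (MvPolynomial (Fin 2) ℤ) (MvPolynomial (Fin 2) ℚ)) := by
      rw [halg]
      exact MvPolynomial.map_injective _ (RingHom.injective_int _)
    have h2 : MvPolynomial.X i ^ n * MvPolynomial.C d = (p : MvPolynomial (Fin 2) ℤ) := by
      apply hinj
      rw [← hp, halg]
      simp
    have h3 : (d : MvPolynomial (Fin 2) ℤ) * MvPolynomial.X i ^ n ∈ I := by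
      have h4 := p.2
      rw [← h2] at h4
      simpa [mul_comm] using h4
    rcases Int.natAbs_eq d with h | h
    · rw [h] at h3
      simpa only [Int.cast_natCast] using h3
    · rw [h] at h3
      simpa only [Int.cast_neg, Int.cast_natCast, neg_mul, neg_mem_iff] using h3
  obtain ⟨n₀, D₀, hD₀, h₀⟩ := hpow 0
  obtain ⟨n₁, D₁, hD₁, h₁⟩ := hpow 1
  refine ⟨D₀ * D₁, Nat.mul_pos hD₀ hD₁, fun R _ a₁ a₂ hco => ?_⟩
  let φ : MvPolynomial (Fin 2) ℤ →+* R :=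
    MvPolynomial.eval₂Hom (Int.castRingHom R) ![a₁, a₂]
  have hφ : ∀ p ∈ I, φ p ∈ Ideal.span
      (Set.range fun k : Fin s × Fin s => (pencil M₁ M₂ a₁ a₂).adjugate k.1 k.2) := by
    intro p hp
    have h1 := Ideal.mem_map_of_mem φ hp
    rw [Ideal.map_span, ← Set.range_comp] at h1
    convert h1 using 3
    funext k
    change _ = φ (A.adjugate k.1 k.2)
    rw [pencil_adjugate_map]
    simp [φ]
  obtain ⟨u, v, huv⟩ := hco.pow (m := n₀) (n := n₁)
  have h4 : ((D₀ * D₁ : ℕ) : R) ∈ Ideal.span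
      (Set.range fun k : Fin s × Fin s => (pencil M₁ M₂ a₁ a₂).adjugate k.1 k.2) := by
    have e₀ := hφ _ h₀
    have e₁ := hφ _ h₁
    simp only [map_mul, map_pow, map_natCast, φ, MvPolynomial.coe_eval₂Hom,
      MvPolynomial.eval₂_X] at e₀ e₁
    have := Ideal.add_mem _ (Ideal.mul_mem_left _ (D₁ * u) e₀) (Ideal.mul_mem_left _ (D₀ * v) e₁)
    convert this using 1
    push_cast
    linear_combination (-(D₀ : R) * D₁) * huv
  exact (Ideal.mem_span_range_iff_exists_fun).mp h4

end PencilDet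

theorem Matrix.adjugate_mul_apply_comm_of_mulVec_eq_zero {n R : Type*} [Fintype n] [DecidableEq n]
    [CommRing R] {A : Matrix n n R} {h : n → R} (hA : A *ᵥ h = 0) (k l j : n) :
    A.adjugate k l * h j = A.adjugate j l * h k := by
  have h1 : A.updateRow l (Pi.single k 1) *ᵥ h = Pi.single l (h k) := by
    funext i
    by_cases hi : i = l
    · subst hi
      simp [Matrix.mulVec, Matrix.updateRow_self]
    · have := congrFun hA i
      simpa [Matrix.mulVec, Matrix.updateRow_ne hi, hi] using this
  have h2 := congrFun (congrArg (fun v => (A.updateRow l (Pi.single k 1)).adjugate *ᵥ v) h1) j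
  simp only [Matrix.mulVec_mulVec, Matrix.adjugate_mul, Matrix.smul_mulVec, Matrix.one_mulVec,
    Pi.smul_apply, smul_eq_mul, Matrix.mulVec_single] at h2
  rw [Matrix.adjugate_apply A k l, h2, Matrix.col_apply, Matrix.adjugate_apply,
    Matrix.updateRow_idem, ← Matrix.adjugate_apply]
  simp

theorem ZMod.card_nsmul_eq_le {q : ℕ} [NeZero q] {D : ℕ} (hD : 0 < D) (v : ZMod q) :
    #{z : ZMod q | D • z = v} ≤ D := by
  classical
  rcases (univ.filter fun z : ZMod q => D • z = v).eq_empty_or_nonempty with h | ⟨z₀, hz₀⟩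
  · rw [h]; simp
  · rw [mem_filter] at hz₀
    refine le_trans ?_ (IsAddCyclic.card_nsmul_eq_zero_le (α := ZMod q) hD)
    refine Finset.card_le_card_of_injOn (fun z => z - z₀) (fun z hz => ?_)
      (fun a _ b _ hab => sub_left_injective hab)
    simp only [coe_filter, mem_univ, true_and, Set.mem_ofPred_eq] at hz ⊢
    rw [smul_sub, hz, hz₀.2, sub_self]

theorem ZMod.card_pi_nsmul_eq_le {q s : ℕ} [NeZero q] {D : ℕ} (hD : 0 < D)
    (v : Fin s → ZMod q) : #{h : Fin s → ZMod q | D • h = v} ≤ D ^ s := by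
  have : (univ.filter fun h : Fin s → ZMod q => D • h = v) ⊆
      Fintype.piFinset fun i => univ.filter fun z : ZMod q => D • z = v i := by
    intro h hh
    simp only [mem_filter, mem_univ, true_and, Fintype.mem_piFinset] at hh ⊢
    exact fun i => congrFun hh i
  refine (card_le_card this).trans ?_
  rw [Fintype.card_piFinset]
  refine (Finset.prod_le_pow_card _ _ D fun i _ => ZMod.card_nsmul_eq_le hD _).trans ?_
  simp

theorem exists_sum_mul_add_mul_eq_one {s : ℕ} {g : ℕ} (k : Fin s → ℤ)
    (h : ∀ d : ℤ, (∀ i, d ∣ k i) → d ∣ g → IsUnit d) :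
    ∃ (u : Fin s → ℤ) (w : ℤ), ∑ i, u i * k i + w * g = 1 := by
  let J : Ideal ℤ := Ideal.span (Set.range k) ⊔ Ideal.span {(g : ℤ)}
  have h1 : IsUnit (Submodule.IsPrincipal.generator J) := by
    apply h
    · intro i
      rw [← Submodule.IsPrincipal.mem_iff_generator_dvd]
      exact Ideal.mem_sup_left (Ideal.subset_span ⟨i, rfl⟩)
    · rw [← Submodule.IsPrincipal.mem_iff_generator_dvd]
      exact Ideal.mem_sup_right (Ideal.subset_span rfl)
  have h2 : (1 : ℤ) ∈ J := by
    rw [Submodule.IsPrincipal.mem_iff_generator_dvd]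
    exact h1.dvd
  obtain ⟨a, ha, b, hb, hab⟩ := Submodule.mem_sup.mp h2
  obtain ⟨u, hu⟩ := Ideal.mem_span_range_iff_exists_fun.mp ha
  obtain ⟨w, hw⟩ := Ideal.mem_span_singleton'.mp hb
  exact ⟨u, w, by rw [hu, hw, hab]⟩

theorem ZMod.exists_eq_mul_of_nsmul_eq_zero {g m s : ℕ} [NeZero (g * m)]
    {h : Fin s → ZMod (g * m)} (hg : g • h = 0) :
    ∃ k : Fin s → ℤ, ∀ j, h j = (m : ZMod (g * m)) * (k j : ZMod (g * m)) := by
  have hg0 : 0 < g := Nat.pos_of_ne_zero (left_ne_zero_of_mul (NeZero.ne (g * m)))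
  have : ∀ j, ∃ k : ℤ, h j = (m : ZMod (g * m)) * (k : ZMod (g * m)) := by
    intro j
    have h1 : ((g * (h j).val : ℕ) : ZMod (g * m)) = 0 := by
      have := congrFun hg j
      simpa [nsmul_eq_mul] using this
    rw [ZMod.natCast_eq_zero_iff] at h1
    obtain ⟨k, hk⟩ := Nat.dvd_of_mul_dvd_mul_left hg0 h1
    refine ⟨k, ?_⟩
    rw [← ZMod.natCast_zmod_val (h j), hk]
    push_cast
    rfl
  choose k hk using this
  exact ⟨k, hk⟩

theorem ZMod.card_ker_torsion_le {q s D : ℕ} [NeZero q] (hD : 0 < D)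
    {A : Matrix (Fin s) (Fin s) (ZMod q)} {c : Fin s × Fin s → ZMod q}
    (hc : ∑ k, c k * A.adjugate k.1 k.2 = (D : ZMod q)) {h₀ : Fin s → ZMod q}
    (hh₀ : A *ᵥ h₀ = 0) :
    #{h : Fin s → ZMod q | A *ᵥ h = 0 ∧ addOrderOf h₀ • h = 0} ≤ D ^ s * addOrderOf h₀ := by
  classical
  have hgq : addOrderOf h₀ ∣ q := addOrderOf_dvd_of_nsmul_eq_zero (by
    funext i; simp)
  obtain ⟨g, hg⟩ : ∃ g, g = addOrderOf h₀ := ⟨_, rfl⟩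
  rw [← hg] at hgq ⊢
  obtain ⟨m, rfl⟩ := hgq
  obtain ⟨k₀, hk₀⟩ := ZMod.exists_eq_mul_of_nsmul_eq_zero (h := h₀) (addOrderOf_dvd_iff_nsmul_eq_zero.mp hg.symm.dvd)
  have hg0 : 0 < g := Nat.pos_of_ne_zero (left_ne_zero_of_mul (NeZero.ne (g * m)))
  obtain ⟨u, w, huw⟩ := exists_sum_mul_add_mul_eq_one (g := g) k₀ (by
    rintro d hd ⟨e, he⟩
    have he0 : e • h₀ = 0 := by
      funext i
      obtain ⟨t, ht⟩ := hd i
      have h2 : (g : ZMod (g * m)) * (m : ZMod (g * m)) = 0 := by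
        rw [← Nat.cast_mul]; exact ZMod.natCast_self _
      have h3 := congrArg (fun z : ℤ => (z : ZMod (g * m))) he
      simp only [Int.cast_natCast, Int.cast_mul] at h3
      rw [Pi.smul_apply, hk₀ i, ht, zsmul_eq_mul, Pi.zero_apply, Int.cast_mul]
      linear_combination t * h2 - m * t * h3
    rw [← addOrderOf_dvd_iff_zsmul_eq_zero, ← hg] at he0
    obtain ⟨f, hf⟩ := he0
    have hgz : (g : ℤ) ≠ 0 := by exact_mod_cast hg0.ne'
    refine IsUnit.of_mul_eq_one f (mul_left_cancel₀ hgz ?_)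
    rw [mul_one]
    nth_rewrite 2 [he]
    rw [hf]; ring)
  have hmaps : ∀ h ∈ univ.filter (fun h : Fin s → ZMod (g * m) => A *ᵥ h = 0 ∧ g • h = 0),
      D • h ∈ univ.filter (fun v => v ∈ AddSubgroup.zmultiples h₀) := by
    intro h hh
    simp only [mem_filter, mem_univ, true_and] at hh ⊢
    obtain ⟨k, hk⟩ := ZMod.exists_eq_mul_of_nsmul_eq_zero hh.2
    have hwedge : ∀ i j, (D : ZMod (g * m)) * (h₀ i * k j) = D * (h₀ j * k i) := by
      intro i j
      rw [← hc, Finset.sum_mul, Finset.sum_mul]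
      refine Finset.sum_congr rfl fun p _ => ?_
      have e1 := Matrix.adjugate_mul_apply_comm_of_mulVec_eq_zero hh₀ p.1 p.2
      have e2 := Matrix.adjugate_mul_apply_comm_of_mulVec_eq_zero hh.1
      have e3 := e2 i p.2 j
      rw [hk i, hk j] at e3
      have e4 := e1 i
      have e5 := e1 j
      rw [hk₀ p.1] at e4 e5
      linear_combination c p * k j * e4 - c p * k i * e5 + c p * k₀ p.1 * e3
    refine ⟨(∑ i, u i * k i) * D, ?_⟩
    funext j
    have hsum : ∑ i, (u i : ZMod (g * m)) * h₀ i = m := by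
      have h1 := congrArg (fun z : ℤ => (m : ZMod (g * m)) * (z : ZMod (g * m))) huw
      have h2 : (g : ZMod (g * m)) * (m : ZMod (g * m)) = 0 := by
        rw [← Nat.cast_mul]; exact ZMod.natCast_self _
      push_cast at h1
      rw [mul_add, mul_one, Finset.mul_sum] at h1
      rw [← h1]
      have : (m : ZMod (g * m)) * (w * g) = 0 := by linear_combination w * h2
      rw [this, add_zero]
      exact Finset.sum_congr rfl fun i _ => by rw [hk₀ i]; ring
    simp only [Pi.smul_apply, zsmul_eq_mul, nsmul_eq_mul]
    push_cast
    rw [hk j, ← hsum]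
    simp only [Finset.sum_mul, Finset.mul_sum]
    refine Finset.sum_congr rfl fun i _ => ?_
    linear_combination (-(u i : ZMod (g * m))) * hwedge i j
  refine (Finset.card_le_mul_card_image_of_maps_to hmaps (D ^ s) fun v _ => ?_).trans ?_
  · refine (card_le_card ?_).trans (ZMod.card_pi_nsmul_eq_le hD v)
    intro h hh
    simp only [mem_filter, mem_univ, true_and] at hh ⊢
    exact hh.2
  · refine Nat.mul_le_mul_left _ (le_of_eq ?_)
    refine Eq.trans ?_ hg.symm
    rw [← Nat.card_zmultiples, Nat.card_eq_fintype_card, Fintype.card_subtype]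


theorem ZMod.card_ker_le_sum_divisors {q s D : ℕ} [NeZero q] (hD : 0 < D)
    {A : Matrix (Fin s) (Fin s) (ZMod q)} {c : Fin s × Fin s → ZMod q}
    (hc : ∑ k, c k * A.adjugate k.1 k.2 = (D : ZMod q)) {δ : ℤ} (hδ : (δ : ZMod q) = A.det) :
    #{h : Fin s → ZMod q | A *ᵥ h = 0} ≤
      ∑ g ∈ q.divisors.filter fun g : ℕ => (g : ℤ) ∣ δ, D ^ s * g := by
  classical
  have hmaps : ∀ h ∈ univ.filter (fun h : Fin s → ZMod q => A *ᵥ h = 0),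
      addOrderOf h ∈ q.divisors.filter fun g : ℕ => (g : ℤ) ∣ δ := by
    intro h hh
    simp only [mem_filter, mem_univ, true_and, Nat.mem_divisors] at hh ⊢
    refine ⟨⟨addOrderOf_dvd_of_nsmul_eq_zero (by funext i; simp), NeZero.ne q⟩, ?_⟩
    rw [addOrderOf_dvd_iff_zsmul_eq_zero]
    have h1 : (A.adjugate * A) *ᵥ h = 0 := by
      rw [← Matrix.mulVec_mulVec, hh, Matrix.mulVec_zero]
    rw [Matrix.adjugate_mul, ← hδ, Matrix.smul_mulVec, Matrix.one_mulVec] at h1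
    funext i
    simpa using congrFun h1 i
  rw [Finset.card_eq_sum_card_fiberwise hmaps]
  refine Finset.sum_le_sum fun g _ => ?_
  rcases ((univ.filter fun h : Fin s → ZMod q => A *ᵥ h = 0).filter
    fun h => addOrderOf h = g).eq_empty_or_nonempty with he | ⟨h₀, hh₀⟩
  · rw [he]; simp
  · simp only [mem_filter, mem_univ, true_and] at hh₀
    rw [← hh₀.2]
    refine (card_le_card fun h hh => ?_).trans (ZMod.card_ker_torsion_le hD hc hh₀.1)
    simp only [mem_filter, mem_univ, true_and] at hh ⊢
    exact ⟨hh.1, by rw [← hh.2]; exact addOrderOf_nsmul_eq_zero h⟩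

theorem ZMod.sum_stdAddChar_dotProduct_eq_zero {q s : ℕ} [NeZero q] {v : Fin s → ZMod q}
    (hv : v ≠ 0) : ∑ b : Fin s → ZMod q, ZMod.stdAddChar (v ⬝ᵥ b) = 0 := by
  let L : (Fin s → ZMod q) →+ ZMod q :=
    { toFun := fun b => v ⬝ᵥ b
      map_zero' := dotProduct_zero v
      map_add' := dotProduct_add v }
  change ∑ b, (ZMod.stdAddChar.compAddMonoidHom L) b = 0
  rw [AddChar.sum_eq_zero_iff_ne_zero]
  intro h
  obtain ⟨i, hi⟩ := Function.ne_iff.mp hv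
  apply ZMod.isPrimitive_stdAddChar q hi
  ext t
  have := DFunLike.congr_fun h (Pi.single i t)
  simpa [L] using this

theorem ZMod.norm_sum_stdAddChar_quadratic_sq_le {q s : ℕ} [NeZero q]
    {A : Matrix (Fin s) (Fin s) (ZMod q)} (hA : A.IsSymm) :
    ‖∑ b : Fin s → ZMod q, ZMod.stdAddChar (b ⬝ᵥ A *ᵥ b)‖ ^ 2 ≤
      (q : ℝ) ^ s * (#{h : Fin s → ZMod q | ((2 : ZMod q) • A) *ᵥ h = 0} : ℝ) := by
  classical
  set ψ : AddChar (ZMod q) ℂ := ZMod.stdAddChar with hψ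
  have hexp : ∀ b h : Fin s → ZMod q, ψ ((h + b) ⬝ᵥ A *ᵥ (h + b)) * starRingEnd ℂ (ψ (b ⬝ᵥ A *ᵥ b)) =
      ψ (h ⬝ᵥ A *ᵥ h) * ψ ((((2 : ZMod q) • A) *ᵥ h) ⬝ᵥ b) := by
    intro b h
    rw [← AddChar.map_neg_eq_conj, ← AddChar.map_add_eq_mul, ← AddChar.map_add_eq_mul]
    congr 1
    have h1 : h ⬝ᵥ A *ᵥ b = (A *ᵥ h) ⬝ᵥ b := by
      rw [Matrix.dotProduct_mulVec, ← Matrix.mulVec_transpose, hA.eq]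
    rw [Matrix.smul_mulVec, smul_dotProduct, Matrix.mulVec_add, dotProduct_add, add_dotProduct,
      add_dotProduct, h1, dotProduct_comm b (A *ᵥ h), smul_eq_mul]
    ring
  have hsq : ((‖∑ b : Fin s → ZMod q, ψ (b ⬝ᵥ A *ᵥ b)‖ ^ 2 : ℝ) : ℂ) =
      ∑ h : Fin s → ZMod q, ψ (h ⬝ᵥ A *ᵥ h) *
        ∑ b : Fin s → ZMod q, ψ ((((2 : ZMod q) • A) *ᵥ h) ⬝ᵥ b) := by
    push_cast
    rw [← Complex.mul_conj', map_sum, Finset.sum_mul_sum, Finset.sum_comm]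
    simp only [Finset.mul_sum, ← hexp]
    rw [Finset.sum_comm (s := univ) (t := univ) (f := fun (h b : Fin s → ZMod q) =>
      ψ ((h + b) ⬝ᵥ A *ᵥ (h + b)) * starRingEnd ℂ (ψ (b ⬝ᵥ A *ᵥ b)))]
    refine Finset.sum_congr rfl fun b _ => ?_
    exact (Equiv.sum_comp (Equiv.addRight b) fun x =>
      ψ (x ⬝ᵥ A *ᵥ x) * starRingEnd ℂ (ψ (b ⬝ᵥ A *ᵥ b))).symm
  have hnorm : ‖∑ b : Fin s → ZMod q, ψ (b ⬝ᵥ A *ᵥ b)‖ ^ 2 =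
      ‖((‖∑ b : Fin s → ZMod q, ψ (b ⬝ᵥ A *ᵥ b)‖ ^ 2 : ℝ) : ℂ)‖ := by
    rw [Complex.norm_real, Real.norm_of_nonneg (by positivity)]
  rw [hnorm, hsq]
  refine (norm_sum_le _ _).trans ?_
  have hterm : ∀ h : Fin s → ZMod q, ‖ψ (h ⬝ᵥ A *ᵥ h) *
      ∑ b : Fin s → ZMod q, ψ ((((2 : ZMod q) • A) *ᵥ h) ⬝ᵥ b)‖ =
      if ((2 : ZMod q) • A) *ᵥ h = 0 then (q : ℝ) ^ s else 0 := by
    intro h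
    rw [norm_mul, AddChar.norm_apply, one_mul]
    split_ifs with hh
    · rw [hh]
      simp
    · rw [ZMod.sum_stdAddChar_dotProduct_eq_zero hh, norm_zero]
  simp only [hterm]
  rw [← Finset.sum_filter, Finset.sum_const, nsmul_eq_mul, mul_comm]

theorem eqc_eq_stdAddChar {q : ℕ} [NeZero q] (n : ℤ) :
    eqc q n = ZMod.stdAddChar (n : ZMod q) := by
  rw [ZMod.stdAddChar_coe, eqc, e2pi]
  congr 1
  push_cast
  ring

theorem ZMod.sum_range_natCast {q : ℕ} [NeZero q] {ι E : Type*} [Fintype ι] [DecidableEq ι]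
    [AddCommMonoid E] (f : (ι → ZMod q) → E) :
    ∑ b ∈ Fintype.piFinset (fun _ : ι => Finset.range q), f (fun i => (b i : ZMod q)) =
      ∑ b : ι → ZMod q, f b := by
  refine Finset.sum_bij' (fun b _ => fun i => (b i : ZMod q)) (fun b _ => fun i => (b i).val)
    (by simp) ?_ ?_ ?_ (by simp)
  · intro b _
    simp [Fintype.mem_piFinset, ZMod.val_lt]
  · intro b hb
    funext i
    rw [Fintype.mem_piFinset] at hb
    exact ZMod.val_cast_of_lt (Finset.mem_range.mp (hb i))
  · intro b _
    funext i
    simp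

theorem isCoprime_of_mem_residues {q : ℕ} {a : ℕ × ℕ} (ha : a ∈ residues q) :
    IsCoprime (a.1 : ZMod q) (a.2 : ZMod q) := by
  have h := (mem_filter.mp ha).2
  have h1 : IsCoprime ((Nat.gcd a.1 a.2 : ℕ) : ℤ) (q : ℤ) := by
    rw [Int.isCoprime_iff_gcd_eq_one]; exact_mod_cast h
  obtain ⟨u, v, huv⟩ := h1
  have h2 : ((Nat.gcd a.1 a.2 : ℕ) : ℤ) = a.1 * Nat.gcdA a.1 a.2 + a.2 * Nat.gcdB a.1 a.2 :=
    Nat.gcd_eq_gcd_ab a.1 a.2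
  refine ⟨u * Nat.gcdA a.1 a.2, u * Nat.gcdB a.1 a.2, ?_⟩
  have h3 := congrArg (fun z : ℤ => (z : ZMod q)) huv
  rw [h2] at h3
  push_cast at h3
  rw [ZMod.natCast_self] at h3
  linear_combination h3

theorem NonsingularPair.exists_norm_sum_sq_le {s : ℕ} {M₁ M₂ : Matrix (Fin s) (Fin s) ℤ}
    (hns : NonsingularPair s M₁ M₂) (hM₁ : M₁.IsSymm) (hM₂ : M₂.IsSymm) [NeZero s] :
    ∃ D : ℕ, 0 < D ∧ ∀ (q : ℕ) (_ : 0 < q) (a : ℕ × ℕ) (_ : a ∈ residues q),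
      ‖∑ b ∈ Fintype.piFinset (fun _ : Fin s => Finset.range q),
        eqc q ((a.1 : ℤ) * quadEval M₁ (fun i => (b i : ℤ)) +
          (a.2 : ℤ) * quadEval M₂ (fun i => (b i : ℤ)))‖ ^ 2 ≤
      (q : ℝ) ^ s * ∑ g ∈ q.divisors.filter fun g : ℕ =>
        (g : ℤ) ∣ (pencil M₁ M₂ (2 * a.1 : ℤ) (2 * a.2 : ℤ)).det, (D : ℝ) * g := by
  obtain ⟨D, hD, hcomb⟩ := hns.exists_adjugate_combination hM₁ hM₂
  refine ⟨(2 ^ (s - 1) * D) ^ s, by positivity, fun q hq a ha => ?_⟩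
  have : NeZero q := ⟨hq.ne'⟩
  have hsum : ∑ b ∈ Fintype.piFinset (fun _ : Fin s => Finset.range q),
        eqc q ((a.1 : ℤ) * quadEval M₁ (fun i => (b i : ℤ)) +
          (a.2 : ℤ) * quadEval M₂ (fun i => (b i : ℤ))) =
      ∑ b : Fin s → ZMod q,
        ZMod.stdAddChar (b ⬝ᵥ pencil M₁ M₂ (a.1 : ZMod q) (a.2 : ZMod q) *ᵥ b) := by
    rw [← ZMod.sum_range_natCast]
    refine Finset.sum_congr rfl fun b _ => ?_
    rw [eqc_eq_stdAddChar, dotProduct_pencil_mulVec]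
    congr 1
    simp [quadEval]
  rw [hsum]
  refine (ZMod.norm_sum_stdAddChar_quadratic_sq_le (pencil_isSymm hM₁ hM₂ _ _)).trans ?_
  refine mul_le_mul_of_nonneg_left ?_ (by positivity)
  obtain ⟨c, hc⟩ := hcomb (ZMod q) a.1 a.2 (isCoprime_of_mem_residues ha)
  have hc' : ∑ k, c k * ((2 : ZMod q) • pencil M₁ M₂ (a.1 : ZMod q) (a.2 : ZMod q)).adjugate k.1 k.2
      = ((2 ^ (s - 1) * D : ℕ) : ZMod q) := by
    rw [Matrix.adjugate_smul]
    push_cast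
    rw [← hc, Finset.mul_sum]
    refine Finset.sum_congr rfl fun k _ => ?_
    rw [Matrix.smul_apply, Fintype.card_fin, smul_eq_mul]
    ring
  have hdet : (((pencil M₁ M₂ (2 * a.1 : ℤ) (2 * a.2 : ℤ)).det : ℤ) : ZMod q) =
      ((2 : ZMod q) • pencil M₁ M₂ (a.1 : ZMod q) (a.2 : ZMod q)).det := by
    rw [← eq_intCast (Int.castRingHom (ZMod q)), RingHom.map_det, RingHom.mapMatrix_apply, pencil_map]
    congr 1
    simp [pencil, smul_add, smul_smul]
  exact_mod_cast ZMod.card_ker_le_sum_divisors (by positivity) hc' hdet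

open Polynomial in
theorem Polynomial.dvd_coeff_mul_det_vandermonde {n : ℕ} {f : ℤ[X]} (hf : f.natDegree ≤ n)
    {g : ℤ} {t : Fin (n + 1) → ℤ} (ht : ∀ i, g ∣ f.eval (t i)) :
    g ∣ f.coeff n * (Matrix.vandermonde t).det := by
  have h1 : Matrix.vandermonde t *ᵥ (fun j : Fin (n + 1) => f.coeff j) = fun i => f.eval (t i) := by
    funext i
    rw [Polynomial.eval_eq_sum_range' (Nat.lt_succ_of_le hf), Finset.sum_range]
    simp only [Matrix.mulVec, dotProduct, Matrix.vandermonde_apply]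
    exact Finset.sum_congr rfl fun j _ => mul_comm _ _
  have h2 : (Matrix.vandermonde t).adjugate *ᵥ (fun i => f.eval (t i)) =
      (Matrix.vandermonde t).det • fun j : Fin (n + 1) => f.coeff j := by
    rw [← h1, Matrix.mulVec_mulVec, Matrix.adjugate_mul, Matrix.smul_mulVec, Matrix.one_mulVec]
  have h3 := congrFun h2 (Fin.last n)
  rw [Pi.smul_apply, smul_eq_mul, Fin.val_last, mul_comm] at h3
  rw [← h3]
  simp only [Matrix.mulVec, dotProduct]
  exact Finset.dvd_sum fun i _ => Dvd.dvd.mul_left (ht i) _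

theorem Matrix.abs_det_vandermonde_le {n : ℕ} {t : Fin n → ℤ} {L : ℕ} (hL : 0 < L)
    (ht : ∀ i j, |t j - t i| ≤ L) : |(Matrix.vandermonde t).det| ≤ (L : ℤ) ^ (n ^ 2) := by
  have hL1 : (1 : ℤ) ≤ L := by exact_mod_cast hL
  rw [Matrix.det_vandermonde, Finset.abs_prod]
  calc ∏ i, |∏ j ∈ Finset.Ioi i, (t j - t i)| ≤ ∏ _i : Fin n, (L : ℤ) ^ n := by
        refine Finset.prod_le_prod (fun _ _ => abs_nonneg _) fun i _ => ?_
        rw [Finset.abs_prod]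
        refine (Finset.prod_le_prod (fun _ _ => abs_nonneg _) fun j _ => ht i j).trans ?_
        rw [Finset.prod_const]
        exact pow_le_pow_right₀ hL1 ((card_le_univ _).trans (Fintype.card_fin n).le)
    _ = (L : ℤ) ^ (n ^ 2) := by simp [← pow_mul, sq]

open Polynomial in
theorem Polynomial.card_le_of_dvd_eval {n : ℕ} {f : ℤ[X]} (hf : f.natDegree ≤ n)
    (hn : f.coeff n ≠ 0) {g L : ℕ} (hL : 0 < L)
    (hgL : (f.coeff n).natAbs * L ^ ((n + 1) ^ 2) < g) {S : Finset ℕ}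
    (hS : ∀ t ∈ S, (g : ℤ) ∣ f.eval (t : ℤ)) (hdiam : ∀ t ∈ S, ∀ u ∈ S, |(u : ℤ) - t| ≤ L) :
    #S ≤ n := by
  by_contra! hcard
  let e := S.orderEmbOfCardLe (k := n + 1) hcard
  let t : Fin (n + 1) → ℤ := fun i => (e i : ℤ)
  have hmem : ∀ i, e i ∈ S := fun i => S.orderEmbOfCardLe_mem hcard i
  have hinj : Function.Injective t := fun i j hij => e.injective (Int.ofNat_inj.mp hij)
  have hdet : (Matrix.vandermonde t).det ≠ 0 := Matrix.det_vandermonde_ne_zero_iff.mpr hinj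
  have hdvd := Polynomial.dvd_coeff_mul_det_vandermonde hf fun i => hS _ (hmem i)
  have h1 := Int.le_of_dvd (abs_pos.mpr (mul_ne_zero hn hdet)) ((dvd_abs _ _).mpr hdvd)
  rw [abs_mul] at h1
  have h2 := Matrix.abs_det_vandermonde_le (t := t) hL fun i j => hdiam _ (hmem i) _ (hmem j)
  have h3 : (g : ℤ) ≤ |f.coeff n| * (L : ℤ) ^ ((n + 1) ^ 2) :=
    h1.trans (mul_le_mul_of_nonneg_left h2 (abs_nonneg _))
  rw [Int.abs_eq_natAbs] at h3
  have h4 : g ≤ (f.coeff n).natAbs * L ^ ((n + 1) ^ 2) := by exact_mod_cast h3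
  omega

open Polynomial in
theorem Polynomial.card_dvd_eval_range_le {n : ℕ} {f : ℤ[X]} (hf : f.natDegree ≤ n)
    (hn : f.coeff n ≠ 0) {g L : ℕ} (hL : 0 < L)
    (hgL : (f.coeff n).natAbs * L ^ ((n + 1) ^ 2) < g) (q : ℕ) :
    #((Finset.range q).filter fun t : ℕ => (g : ℤ) ∣ f.eval (t : ℤ)) ≤ n * (q / L + 1) := by
  have hmaps : ∀ t ∈ (Finset.range q).filter (fun t : ℕ => (g : ℤ) ∣ f.eval (t : ℤ)),
      t / L ∈ Finset.range (q / L + 1) := by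
    intro t ht
    rw [mem_filter, Finset.mem_range] at ht
    exact Finset.mem_range.mpr (Nat.lt_succ_of_le (Nat.div_le_div_right ht.1.le))
  refine (Finset.card_le_mul_card_image_of_maps_to hmaps n fun k _ => ?_).trans ?_
  · refine Polynomial.card_le_of_dvd_eval hf hn hL hgL (fun t ht => ?_) fun t ht u hu => ?_
    · exact (mem_filter.mp (mem_filter.mp ht).1).2
    · have h1 := (mem_filter.mp ht).2
      have h2 := (mem_filter.mp hu).2
      have e1 := Nat.div_add_mod t L
      have e2 := Nat.div_add_mod u L
      rw [h1] at e1
      rw [h2] at e2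
      have l1 := Nat.mod_lt t hL
      have l2 := Nat.mod_lt u hL
      rw [abs_le]
      constructor <;> omega
  · rw [Finset.card_range]

theorem exists_card_dvd_eval_range_le (n : ℕ) {l : ℤ} (hl : l ≠ 0) :
    ∃ C δ : ℝ, 0 < C ∧ 0 < δ ∧ ∀ (f : Polynomial ℤ), f.natDegree ≤ n → f.coeff n = l →
      ∀ g q : ℕ, 0 < g → g ≤ q →
        (#((Finset.range q).filter fun t : ℕ => (g : ℤ) ∣ f.eval (t : ℤ)) : ℝ) ≤ C * q * (g : ℝ) ^ (-δ) := by
  set E : ℕ := (n + 1) ^ 2 with hE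
  have hE0 : 0 < E := by positivity
  set a : ℝ := 2 * (l.natAbs : ℝ) with ha
  have hl1 : (1 : ℝ) ≤ l.natAbs := by exact_mod_cast Int.natAbs_pos.mpr hl
  have ha0 : 0 < a := by positivity
  set δ : ℝ := (E : ℝ)⁻¹ with hδ
  have hδ0 : 0 < δ := by positivity
  have hδ1 : δ ≤ 1 := inv_le_one_of_one_le₀ (by exact_mod_cast hE0)
  refine ⟨a ^ δ + n * (2 * a ^ δ + 1), δ, by positivity, hδ0, fun f hf hfl g q hg hgq => ?_⟩
  have hg0 : (0 : ℝ) < g := by exact_mod_cast hg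
  have hg1 : (1 : ℝ) ≤ g := by exact_mod_cast hg
  have hgq' : (g : ℝ) ≤ q := by exact_mod_cast hgq
  have hq0 : (0 : ℝ) < q := hg0.trans_le hgq'
  have hgδ : 0 < (g : ℝ) ^ (-δ) := by positivity
  have hone : 1 ≤ q * (g : ℝ) ^ (-δ) := by
    rw [Real.rpow_neg hg0.le, ← div_eq_mul_inv, one_le_div (by positivity)]
    calc (g : ℝ) ^ δ ≤ (g : ℝ) ^ (1 : ℝ) := Real.rpow_le_rpow_of_exponent_le hg1 hδ1
      _ = g := Real.rpow_one _
      _ ≤ q := hgq'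
  set y : ℝ := ((g : ℝ) / a) ^ δ with hy
  have hy0 : 0 < y := by positivity
  have hyinv : y⁻¹ = a ^ δ * (g : ℝ) ^ (-δ) := by
    rw [hy, Real.div_rpow hg0.le ha0.le, inv_div, Real.rpow_neg hg0.le, div_eq_mul_inv]
  rcases Nat.eq_zero_or_pos ⌊y⌋₊ with hL | hL
  · have hy1 : y < 1 := Nat.floor_eq_zero.mp hL
    have h1 : 1 ≤ a ^ δ * (g : ℝ) ^ (-δ) := by
      rw [← hyinv]; exact (one_le_inv₀ hy0).mpr hy1.le
    have h2 : (#((Finset.range q).filter fun t : ℕ => (g : ℤ) ∣ f.eval (t : ℤ)) : ℝ) ≤ q := by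
      exact_mod_cast (Finset.card_filter_le _ _).trans (Finset.card_range q).le
    have h3 : (0 : ℝ) ≤ n * (2 * a ^ δ + 1) * q * (g : ℝ) ^ (-δ) := by positivity
    nlinarith
  · have hLy : (⌊y⌋₊ : ℝ) ≤ y := Nat.floor_le hy0.le
    have hyL : y < ⌊y⌋₊ + 1 := Nat.lt_floor_add_one y
    have hL1 : (1 : ℝ) ≤ ⌊y⌋₊ := by exact_mod_cast hL
    have hbound : (f.coeff n).natAbs * ⌊y⌋₊ ^ E < g := by
      have h1 : (⌊y⌋₊ : ℝ) ^ E ≤ g / a := by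
        calc (⌊y⌋₊ : ℝ) ^ E ≤ y ^ E := by gcongr
          _ = g / a := by
            rw [hy, hδ, Real.rpow_inv_natCast_pow (by positivity) hE0.ne']
      have h2 : (l.natAbs : ℝ) * (⌊y⌋₊ : ℝ) ^ E < g := by
        have h3 : (l.natAbs : ℝ) * (g / a) = g / 2 := by
          rw [ha]; field_simp
        calc (l.natAbs : ℝ) * (⌊y⌋₊ : ℝ) ^ E ≤ (l.natAbs : ℝ) * (g / a) := by gcongr
          _ = g / 2 := h3
          _ < g := by linarith
      rw [hfl]
      exact_mod_cast h2
    have hc := Polynomial.card_dvd_eval_range_le hf (by rw [hfl]; exact hl) hL hbound q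
    have hdiv : ((q / ⌊y⌋₊ : ℕ) : ℝ) ≤ q * (2 * (a ^ δ * (g : ℝ) ^ (-δ))) := by
      refine Nat.cast_div_le.trans ?_
      rw [div_eq_mul_inv, ← hyinv]
      refine mul_le_mul_of_nonneg_left ?_ hq0.le
      rw [← div_eq_mul_inv, inv_eq_one_div, div_le_div_iff₀ (by linarith) hy0]
      linarith
    have hc' : (#((Finset.range q).filter fun t : ℕ => (g : ℤ) ∣ f.eval (t : ℤ)) : ℝ) ≤
        n * ((q / ⌊y⌋₊ : ℕ) + 1) := by exact_mod_cast hc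
    calc (#((Finset.range q).filter fun t : ℕ => (g : ℤ) ∣ f.eval (t : ℤ)) : ℝ)
        ≤ n * ((q / ⌊y⌋₊ : ℕ) + 1) := hc'
      _ ≤ n * (q * (2 * (a ^ δ * (g : ℝ) ^ (-δ))) + q * (g : ℝ) ^ (-δ)) := by gcongr
      _ ≤ a ^ δ * q * (g : ℝ) ^ (-δ) +
          n * (q * (2 * (a ^ δ * (g : ℝ) ^ (-δ))) + q * (g : ℝ) ^ (-δ)) := by
          have : 0 ≤ a ^ δ * q * (g : ℝ) ^ (-δ) := by positivity
          linarith
      _ = _ := by ring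

theorem Real.sqrt_sum_le_sum_sqrt {ι : Type*} (t : Finset ι) {f : ι → ℝ} (hf : ∀ i ∈ t, 0 ≤ f i) :
    √(∑ i ∈ t, f i) ≤ ∑ i ∈ t, √(f i) := by
  classical
  induction t using Finset.induction_on with
  | empty => simp
  | insert a t ha ih =>
    rw [Finset.sum_insert ha, Finset.sum_insert ha]
    have h1 := ih fun i hi => hf i (Finset.mem_insert_of_mem hi)
    have h2 := hf a (Finset.mem_insert_self _ _)
    have h3 := Finset.sum_nonneg fun i hi => hf i (Finset.mem_insert_of_mem (a := i) (b := a) hi)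
    refine (Real.sqrt_le_iff.mpr ⟨by positivity, ?_⟩ :
      _ ≤ √(f a) + √(∑ i ∈ t, f i)).trans (by linarith)
    nlinarith [Real.sq_sqrt h2, Real.sq_sqrt h3, Real.sqrt_nonneg (f a),
      Real.sqrt_nonneg (∑ i ∈ t, f i), mul_nonneg (Real.sqrt_nonneg (f a))
        (Real.sqrt_nonneg (∑ i ∈ t, f i))]

theorem summable_sum_divisorsAntidiagonal_mul {h k : ℕ → ℝ} (hh : Summable h) (hk : Summable k)
    (hh0 : 0 ≤ h) (hk0 : 0 ≤ k) :
    Summable fun q : ℕ => ∑ d ∈ q.divisorsAntidiagonal, h d.1 * k d.2 := by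
  have h1 : Summable fun d : ℕ × ℕ => h d.1 * k d.2 := hh.mul_of_nonneg hk hh0 hk0
  have hinj : Function.Injective
      (fun x : (Σ q : ℕ, {d // d ∈ q.divisorsAntidiagonal}) => (x.2 : ℕ × ℕ)) := by
    rintro ⟨q, d, hd⟩ ⟨q', d', hd'⟩ hdd
    obtain rfl : d = d' := hdd
    obtain rfl : q = q' :=
      (Nat.mem_divisorsAntidiagonal.mp hd).1.symm.trans (Nat.mem_divisorsAntidiagonal.mp hd').1
    rfl
  have h2 := (h1.comp_injective hinj).sigma
  refine h2.congr fun q => ?_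
  rw [tsum_fintype, Finset.univ_eq_attach]
  exact Finset.sum_attach q.divisorsAntidiagonal fun d => h d.1 * k d.2

theorem pencil_det_map {s : ℕ} {R S : Type*} [CommRing R] [CommRing S]
    {M₁ M₂ : Matrix (Fin s) (Fin s) ℤ} (f : R →+* S) (a₁ a₂ : R) :
    f (pencil M₁ M₂ a₁ a₂).det = (pencil M₁ M₂ (f a₁) (f a₂)).det := by
  rw [← pencil_map, RingHom.map_det, RingHom.mapMatrix_apply]

theorem pencil_det_modEq {s : ℕ} {M₁ M₂ : Matrix (Fin s) (Fin s) ℤ} {g a a' b b' : ℤ}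
    (ha : a ≡ a' [ZMOD g]) (hb : b ≡ b' [ZMOD g]) :
    (pencil M₁ M₂ a b).det ≡ (pencil M₁ M₂ a' b').det [ZMOD g] := by
  rw [← Int.modEq_natAbs] at *
  rw [← ZMod.intCast_eq_intCast_iff] at *
  have h1 := pencil_det_map (M₁ := M₁) (M₂ := M₂) (Int.castRingHom (ZMod g.natAbs)) a b
  have h2 := pencil_det_map (M₁ := M₁) (M₂ := M₂) (Int.castRingHom (ZMod g.natAbs)) a' b'
  simp only [eq_intCast] at h1 h2
  rw [h1, h2, ha, hb]

open Polynomial in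
theorem eval_det_X_smul_pencil {s : ℕ} {M₁ M₂ : Matrix (Fin s) (Fin s) ℤ} (a b c d t : ℤ) :
    (((X : ℤ[X]) • (pencil M₁ M₂ a b).map C + (pencil M₁ M₂ c d).map C).det).eval t =
      (pencil M₁ M₂ (t * a + c) (t * b + d)).det := by
  rw [← coe_evalRingHom, RingHom.map_det]
  congr 1
  ext i j
  simp [pencil, -zsmul_eq_mul]
  ring

theorem NonsingularPair.exists_card_dvd_pencil_det_le {s : ℕ} {M₁ M₂ : Matrix (Fin s) (Fin s) ℤ}
    (hns : NonsingularPair s M₁ M₂) (hM₁ : M₁.IsSymm) (hM₂ : M₂.IsSymm) :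
    ∃ C δ : ℝ, 0 < C ∧ 0 < δ ∧ ∀ q g : ℕ, 0 < q → g ∣ q →
      (#((Finset.range q ×ˢ Finset.range q).filter fun a : ℕ × ℕ =>
        (g : ℤ) ∣ (pencil M₁ M₂ (2 * a.1 : ℤ) (2 * a.2 : ℤ)).det) : ℝ) ≤
          C * (q : ℝ) ^ 2 * (g : ℝ) ^ (-δ) := by
  obtain ⟨t₀, ht₀⟩ := hns.exists_pencil_det_ne_zero hM₁ hM₂
  have hl : (pencil M₁ M₂ (2 : ℤ) (2 * t₀)).det ≠ 0 := by
    have : pencil M₁ M₂ (2 : ℤ) (2 * t₀) = (2 : ℤ) • pencil M₁ M₂ (1 : ℤ) t₀ := by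
      simp [pencil, smul_smul, smul_add, -zsmul_eq_mul]
    rw [this, Matrix.det_smul]
    exact mul_ne_zero (by positivity) ht₀
  obtain ⟨C, δ, hC, hδ, hcard⟩ := exists_card_dvd_eval_range_le s hl
  refine ⟨C, δ, hC, hδ, fun q g hq hgq => ?_⟩
  have hg : 0 < g := Nat.pos_of_dvd_of_pos hgq hq
  have hq' : (0 : ℤ) < q := by exact_mod_cast hq
  have hgq' : (g : ℤ) ∣ q := by exact_mod_cast hgq
  set B : ℝ := C * q * (g : ℝ) ^ (-δ) with hB
  have hmaps : ∀ a ∈ (Finset.range q ×ˢ Finset.range q).filter (fun a : ℕ × ℕ =>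
      (g : ℤ) ∣ (pencil M₁ M₂ (2 * a.1 : ℤ) (2 * a.2 : ℤ)).det),
      (((a.2 : ℤ) - t₀ * a.1) % q).toNat ∈ Finset.range q := by
    intro a _
    rw [Finset.mem_range]
    have := Int.emod_lt_of_pos ((a.2 : ℤ) - t₀ * a.1) hq'
    omega
  have hfib := Finset.card_le_mul_card_image_of_maps_to hmaps ⌊B⌋₊ fun v _ => ?_
  · rw [Finset.card_range] at hfib
    calc _ ≤ ((⌊B⌋₊ * q : ℕ) : ℝ) := by exact_mod_cast hfib
      _ = ⌊B⌋₊ * (q : ℝ) := by push_cast; rfl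
      _ ≤ B * q := by
        gcongr
        exact Nat.floor_le (by positivity)
      _ = _ := by rw [hB]; ring
  · refine Nat.le_floor (le_trans ?_ (hcard ((Polynomial.X : Polynomial ℤ) •
      (pencil M₁ M₂ (2 : ℤ) (2 * t₀)).map Polynomial.C +
        (pencil M₁ M₂ (0 : ℤ) (2 * v)).map Polynomial.C).det ?_ ?_ g q hg (Nat.le_of_dvd hq hgq)))
    rotate_left
    · simpa using Polynomial.natDegree_det_X_add_C_le (pencil M₁ M₂ (2 : ℤ) (2 * t₀))
        (pencil M₁ M₂ (0 : ℤ) (2 * v))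
    · simpa using Polynomial.coeff_det_X_add_C_card (pencil M₁ M₂ (2 : ℤ) (2 * t₀))
        (pencil M₁ M₂ (0 : ℤ) (2 * v))
    · have key : ∀ a ∈ ((Finset.range q ×ˢ Finset.range q).filter (fun a : ℕ × ℕ =>
          (g : ℤ) ∣ (pencil M₁ M₂ (2 * a.1 : ℤ) (2 * a.2 : ℤ)).det)).filter
          (fun a => (((a.2 : ℤ) - t₀ * a.1) % q).toNat = v),
          (a.2 : ℤ) ≡ v + t₀ * a.1 [ZMOD q] := by
        intro a ha
        have h1 := (mem_filter.mp ha).2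
        have h2 := Int.emod_nonneg ((a.2 : ℤ) - t₀ * a.1) hq'.ne'
        have h3 : ((a.2 : ℤ) - t₀ * a.1) % q = v := by omega
        have h4 : (a.2 : ℤ) - t₀ * a.1 ≡ v [ZMOD q] := by
          rw [← h3]; exact (Int.mod_modEq _ _).symm
        simpa using h4.add_right (t₀ * a.1)
      rw [Nat.cast_le]
      refine Finset.card_le_card_of_injOn Prod.fst (fun a ha => ?_) fun a ha b hb hab => ?_
      · have hk := key a ha
        have h1 := mem_filter.mp (mem_filter.mp ha).1
        rw [Finset.mem_coe, mem_filter]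
        refine ⟨(Finset.mem_product.mp h1.1).1, ?_⟩
        rw [eval_det_X_smul_pencil]
        have hmod : (pencil M₁ M₂ ((a.1 : ℤ) * 2 + 0) (a.1 * (2 * t₀) + 2 * v)).det ≡
            (pencil M₁ M₂ (2 * a.1 : ℤ) (2 * a.2 : ℤ)).det [ZMOD g] := by
          refine pencil_det_modEq ?_ ?_
          · rw [add_zero, mul_comm]
          · have h5 := ((hk.of_dvd hgq').mul_left 2).symm
            have h6 : (a.1 : ℤ) * (2 * t₀) + 2 * v = 2 * (v + t₀ * a.1) := by ring
            rw [h6]; exact h5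
        exact (Int.ModEq.dvd_iff hmod).mpr h1.2
      · have ha2 := Finset.mem_range.mp
          (Finset.mem_product.mp (mem_filter.mp (mem_filter.mp ha).1).1).2
        have hb2 := Finset.mem_range.mp
          (Finset.mem_product.mp (mem_filter.mp (mem_filter.mp hb).1).1).2
        have h1 := key a ha
        rw [hab] at h1
        have h2 := Int.natCast_modEq_iff.mp (h1.trans (key b hb).symm)
        exact Prod.ext hab (Nat.ModEq.eq_of_lt_of_lt h2 ha2 hb2)

theorem NonsingularPair.exists_norm_Dq_zero_le {s : ℕ} {M₁ M₂ : Matrix (Fin s) (Fin s) ℤ}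
    (hns : NonsingularPair s M₁ M₂) (hM₁ : M₁.IsSymm) (hM₂ : M₂.IsSymm) [NeZero s] :
    ∃ C δ : ℝ, 0 < C ∧ 0 < δ ∧ ∀ q : ℕ, 0 < q →
      ‖Dq s M₁ M₂ q 0‖ ≤ C * √((q : ℝ) ^ s) * (q : ℝ) ^ 2 *
        ∑ g ∈ q.divisors, (g : ℝ) ^ (1 / 2 - δ) := by
  obtain ⟨D, hD, hS⟩ := hns.exists_norm_sum_sq_le hM₁ hM₂
  obtain ⟨C, δ, hC, hδ, hcard⟩ := hns.exists_card_dvd_pencil_det_le hM₁ hM₂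
  have hD' : (0 : ℝ) < D := by exact_mod_cast hD
  refine ⟨√D * C, δ, by positivity, hδ, fun q hq => ?_⟩
  let Δ : ℕ × ℕ → ℤ := fun a => (pencil M₁ M₂ (2 * a.1 : ℤ) (2 * a.2 : ℤ)).det
  have h1 : ∀ a ∈ residues q, ‖∑ b ∈ Fintype.piFinset (fun _ : Fin s => Finset.range q),
      eqc q ((a.1 : ℤ) * quadEval M₁ (fun i => (b i : ℤ)) +
        (a.2 : ℤ) * quadEval M₂ (fun i => (b i : ℤ)) + ∑ i, (b i : ℤ) * (0 : Fin s → ℤ) i)‖ ≤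
      √((q : ℝ) ^ s) * ∑ g ∈ q.divisors, if (g : ℤ) ∣ Δ a then √D * √g else 0 := by
    intro a ha
    simp only [Pi.zero_apply, mul_zero, Finset.sum_const_zero, add_zero]
    refine (Real.le_sqrt_of_sq_le (hS q hq a ha)).trans ?_
    rw [Real.sqrt_mul (by positivity), ← Finset.sum_filter]
    refine mul_le_mul_of_nonneg_left ?_ (Real.sqrt_nonneg _)
    refine (Real.sqrt_sum_le_sum_sqrt _ fun g _ => by positivity).trans (Finset.sum_le_sum ?_)
    intro g _
    rw [Real.sqrt_mul hD'.le]
  calc ‖Dq s M₁ M₂ q 0‖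
      ≤ ∑ a ∈ residues q, √((q : ℝ) ^ s) * ∑ g ∈ q.divisors, if (g : ℤ) ∣ Δ a then √D * √g else 0 :=
        norm_sum_le_of_le _ h1
    _ ≤ ∑ a ∈ Finset.range q ×ˢ Finset.range q,
          √((q : ℝ) ^ s) * ∑ g ∈ q.divisors, if (g : ℤ) ∣ Δ a then √D * √g else 0 := by
        refine Finset.sum_le_sum_of_subset_of_nonneg (Finset.filter_subset _ _) fun a _ _ => ?_
        exact mul_nonneg (Real.sqrt_nonneg _)
          (Finset.sum_nonneg fun g _ => by split_ifs <;> positivity)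
    _ = √((q : ℝ) ^ s) * ∑ g ∈ q.divisors,
          (#((Finset.range q ×ˢ Finset.range q).filter fun a => (g : ℤ) ∣ Δ a) : ℝ) * (√D * √g) := by
        rw [← Finset.mul_sum, Finset.sum_comm]
        congr 1
        refine Finset.sum_congr rfl fun g _ => ?_
        rw [← Finset.sum_filter, Finset.sum_const, nsmul_eq_mul]
    _ ≤ √((q : ℝ) ^ s) * ∑ g ∈ q.divisors,
          (C * (q : ℝ) ^ 2 * (g : ℝ) ^ (-δ)) * (√D * √g) := by
        gcongr with g hg
        exact hcard q g hq (Nat.dvd_of_mem_divisors hg)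
    _ = _ := by
        rw [Finset.mul_sum, Finset.mul_sum]
        refine Finset.sum_congr rfl fun g hg => ?_
        have hg0 : (0 : ℝ) < g := by exact_mod_cast Nat.pos_of_mem_divisors hg
        rw [sub_eq_add_neg, Real.rpow_add hg0, ← Real.sqrt_eq_rpow]
        ring

theorem NonsingularPair.summable_norm_Dq_zero {s : ℕ} {M₁ M₂ : Matrix (Fin s) (Fin s) ℤ}
    (hns : NonsingularPair s M₁ M₂) (hM₁ : M₁.IsSymm) (hM₂ : M₂.IsSymm) (hs : 7 ≤ s) :
    Summable (fun q : ℕ => (q : ℝ) ^ (-(s : ℤ)) * ‖Dq s M₁ M₂ q 0‖) := by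
  have : NeZero s := ⟨by omega⟩
  obtain ⟨C, δ, hC, hδ, hDq⟩ := hns.exists_norm_Dq_zero_le hM₁ hM₂
  have hsum := summable_sum_divisorsAntidiagonal_mul
    (h := fun g : ℕ => (g : ℝ) ^ (-1 - δ)) (k := fun m : ℕ => (m : ℝ) ^ (-(3 / 2) : ℝ))
    (Real.summable_nat_rpow.mpr (by linarith)) (Real.summable_nat_rpow.mpr (by norm_num))
    (fun g => by positivity) (fun m => by positivity)
  refine (hsum.mul_left C).of_nonneg_of_le (fun q => by positivity) fun q => ?_
  rcases Nat.eq_zero_or_pos q with rfl | hq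
  · rw [Nat.cast_zero, _root_.zero_zpow _ (by omega)]
    simp
  have hq0 : (0 : ℝ) < q := by exact_mod_cast hq
  have hq1 : (1 : ℝ) ≤ q := by exact_mod_cast hq
  have hpow : (q : ℝ) ^ (-(s : ℤ)) * (√((q : ℝ) ^ s) * (q : ℝ) ^ 2) ≤ (q : ℝ) ^ (-(3 / 2) : ℝ) := by
    rw [Real.sqrt_eq_rpow, ← Real.rpow_natCast, ← Real.rpow_natCast, ← Real.rpow_intCast,
      ← Real.rpow_mul hq0.le, ← Real.rpow_add hq0, ← Real.rpow_add hq0]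
    refine Real.rpow_le_rpow_of_exponent_le hq1 ?_
    have : (7 : ℝ) ≤ s := by exact_mod_cast hs
    push_cast
    linarith
  calc (q : ℝ) ^ (-(s : ℤ)) * ‖Dq s M₁ M₂ q 0‖
      ≤ (q : ℝ) ^ (-(s : ℤ)) * (C * √((q : ℝ) ^ s) * (q : ℝ) ^ 2 *
        ∑ g ∈ q.divisors, (g : ℝ) ^ (1 / 2 - δ)) := by
        gcongr
        exact hDq q hq
    _ = C * (((q : ℝ) ^ (-(s : ℤ)) * (√((q : ℝ) ^ s) * (q : ℝ) ^ 2)) *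
        ∑ g ∈ q.divisors, (g : ℝ) ^ (1 / 2 - δ)) := by ring
    _ ≤ C * ((q : ℝ) ^ (-(3 / 2) : ℝ) * ∑ g ∈ q.divisors, (g : ℝ) ^ (1 / 2 - δ)) := by
        gcongr
    _ = _ := by
        rw [Nat.sum_divisorsAntidiagonal
          (f := fun g m : ℕ => (g : ℝ) ^ (-1 - δ) * (m : ℝ) ^ (-(3 / 2) : ℝ)), Finset.mul_sum]
        congr 1
        refine Finset.sum_congr rfl fun g hg => ?_
        have hgq := Nat.dvd_of_mem_divisors hg
        have hg0 : (0 : ℝ) < g := by exact_mod_cast Nat.pos_of_mem_divisors hg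
        obtain ⟨m, rfl⟩ := hgq
        have hm : 0 < m := Nat.pos_of_mul_pos_left hq
        have hm0 : (0 : ℝ) < m := by exact_mod_cast hm
        have hgm : g * m / g = m := Nat.mul_div_cancel_left _ (Nat.pos_of_mem_divisors hg)
        rw [hgm, Nat.cast_mul, Real.mul_rpow hg0.le hm0.le, mul_right_comm, ← Real.rpow_add hg0]
        congr 2
        ring

theorem e2pi_add (x y : ℝ) : e2pi (x + y) = e2pi x * e2pi y := by
  rw [e2pi, e2pi, e2pi, ← Complex.exp_add]
  push_cast
  ring_nf

theorem e2pi_eq_fourierChar (x : ℝ) : e2pi x = (Real.fourierChar x : ℂ) := by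
  rw [Real.fourierChar_apply, e2pi]
  push_cast
  ring_nf

theorem norm_e2pi (x : ℝ) : ‖e2pi x‖ = 1 := by
  rw [e2pi_eq_fourierChar, Circle.norm_coe]

theorem conj_e2pi (x : ℝ) : (starRingEnd ℂ) (e2pi x) = e2pi (-x) := by
  rw [e2pi_eq_fourierChar, e2pi_eq_fourierChar, AddChar.map_neg_eq_inv, Circle.coe_inv_eq_conj]

theorem continuous_e2pi : Continuous e2pi := by
  unfold e2pi
  fun_prop

section Differencing

variable {s : ℕ}

theorem sq_norm_integral_quadratic_le {M : Matrix (Fin s) (Fin s) ℝ} (hM : M.IsSymm)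
    {w : (Fin s → ℝ) → ℝ} (hw : Continuous w) (hw_supp : HasCompactSupport w) :
    ‖∫ x, (w x : ℂ) * e2pi (x ⬝ᵥ M *ᵥ x)‖ ^ 2 ≤
      ∫ h, ‖∫ x, ((w x : ℂ) * w (x + h)) * e2pi (x ⬝ᵥ ((2 : ℝ) • M *ᵥ h))‖ := by
  set Q : (Fin s → ℝ) → ℝ := fun x => x ⬝ᵥ M *ᵥ x with hQ
  have hQc : Continuous Q := by
    simp only [hQ, dotProduct, mulVec]
    fun_prop
  have hexp : ∀ x h, Q (x + h) + -Q x = Q h + x ⬝ᵥ ((2 : ℝ) • M *ᵥ h) := by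
    intro x h
    have : h ⬝ᵥ M *ᵥ x = x ⬝ᵥ M *ᵥ h := by
      rw [Matrix.dotProduct_mulVec, ← Matrix.mulVec_transpose, hM.eq, dotProduct_comm]
    simp only [hQ, Matrix.mulVec_add, add_dotProduct, dotProduct_add, this, dotProduct_smul,
      smul_eq_mul]
    ring
  let f : (Fin s → ℝ) → (Fin s → ℝ) → ℂ := fun x h =>
    ((w x : ℂ) * w (x + h)) * e2pi (Q (x + h) + -Q x)
  have hf : Integrable (Function.uncurry f) (volume.prod volume) := by
    refine Continuous.integrable_of_hasCompactSupport ?_ ?_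
    · have := continuous_e2pi
      simp only [f, Function.uncurry_def]
      fun_prop
    · refine HasCompactSupport.intro (K := (fun p : (Fin s → ℝ) × (Fin s → ℝ) =>
        (p.1, p.2 - p.1)) '' (tsupport w ×ˢ tsupport w))
        ((hw_supp.isCompact.prod hw_supp.isCompact).image (by fun_prop)) ?_
      rintro ⟨x, h⟩ hxh
      by_contra hne
      simp only [f, Function.uncurry_apply_pair, mul_eq_zero, not_or,
        Complex.ofReal_eq_zero] at hne
      exact hxh ⟨(x, x + h), ⟨subset_tsupport _ hne.1.1, subset_tsupport _ hne.1.2⟩, by simp⟩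
  have hconj : (starRingEnd ℂ) (∫ x, (w x : ℂ) * e2pi (Q x)) = ∫ x, (w x : ℂ) * e2pi (-Q x) := by
    rw [← integral_conj]
    simp only [map_mul, Complex.conj_ofReal, conj_e2pi]
  have hsq : (∫ x, (w x : ℂ) * e2pi (-Q x)) * (∫ y, (w y : ℂ) * e2pi (Q y)) =
      ∫ h, e2pi (Q h) * ∫ x, ((w x : ℂ) * w (x + h)) * e2pi (x ⬝ᵥ ((2 : ℝ) • M *ᵥ h)) := by
    calc (∫ x, (w x : ℂ) * e2pi (-Q x)) * (∫ y, (w y : ℂ) * e2pi (Q y))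
        = ∫ x, ((w x : ℂ) * e2pi (-Q x)) * ∫ y, (w y : ℂ) * e2pi (Q y) :=
          (integral_mul_const _ _).symm
      _ = ∫ x, ∫ h, f x h := by
          refine integral_congr_ae (.of_forall fun x => ?_)
          simp only
          rw [← integral_const_mul, ← integral_add_left_eq_self _ x]
          refine integral_congr_ae (.of_forall fun h => ?_)
          simp only [f, e2pi_add]
          ring
      _ = ∫ h, ∫ x, f x h := integral_integral_swap hf
      _ = _ := by
          refine integral_congr_ae (.of_forall fun h => ?_)
          simp only
          rw [← integral_const_mul]
          refine integral_congr_ae (.of_forall fun x => ?_)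
          simp only [f, hexp, e2pi_add]
          ring
  calc ‖∫ x, (w x : ℂ) * e2pi (Q x)‖ ^ 2
      = ‖(∫ x, (w x : ℂ) * e2pi (-Q x)) * (∫ y, (w y : ℂ) * e2pi (Q y))‖ := by
        rw [← hconj, norm_mul, RCLike.norm_conj, sq]
    _ ≤ _ := by
        rw [hsq]
        refine (norm_integral_le_integral_norm _).trans (le_of_eq ?_)
        simp only [norm_mul (e2pi _), norm_e2pi, one_mul]

theorem pow_abs_mul_norm_integral_e2pi_le {G : (Fin s → ℝ) → ℂ} (hG : ContDiff ℝ (⊤ : ℕ∞) G)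
    (hG_supp : HasCompactSupport G) (n : ℕ) (ξ : Fin s → ℝ) (j : Fin s) :
    |ξ j| ^ n * ‖∫ x, G x * e2pi (x ⬝ᵥ ξ)‖ ≤
      2 ^ n * ∑ p ∈ Finset.range (n + 1), ∫ x, ‖iteratedFDeriv ℝ p G x‖ := by
  let L : (Fin s → ℝ) →L[ℝ] (Fin s → ℝ) →L[ℝ] ℝ :=
    ∑ i, (ContinuousLinearMap.proj (R := ℝ) (φ := fun _ : Fin s => ℝ) i).smulRight
      (ContinuousLinearMap.proj (R := ℝ) (φ := fun _ : Fin s => ℝ) i)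
  have hL : ∀ x y, L x y = x ⬝ᵥ y := fun x y => by
    simp [L, dotProduct]
  have hint : ∀ (k m : ℕ), (k : ℕ∞) ≤ (0 : ℕ∞) → (m : ℕ∞) ≤ (n : ℕ∞) →
      Integrable (fun v => ‖v‖ ^ k * ‖iteratedFDeriv ℝ m G v‖) (volume : Measure (Fin s → ℝ)) := by
    intro k m _ _
    have hc : Continuous (iteratedFDeriv ℝ m G) :=
      hG.continuous_iteratedFDeriv (by exact_mod_cast le_top)
    exact Continuous.integrable_of_hasCompactSupport (by fun_prop)
      ((hG_supp.iteratedFDeriv m).norm.mul_left)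
  have h := VectorFourier.pow_mul_norm_iteratedFDeriv_fourierIntegral_le (μ := volume) L
    (K := 0) (N := n) (k := 0) (n := n) (hG.of_le (by exact_mod_cast le_top)) hint le_rfl le_rfl
    (Pi.single j 1) (-ξ)
  rw [norm_iteratedFDeriv_zero, hL, single_dotProduct, one_mul, Pi.neg_apply, abs_neg] at h
  have hF : VectorFourier.fourierIntegral Real.fourierChar volume L.toLinearMap₁₂ G (-ξ) =
      ∫ x, G x * e2pi (x ⬝ᵥ ξ) := by
    rw [VectorFourier.fourierIntegral]
    refine integral_congr_ae (.of_forall fun x => ?_)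
    have hx : L.toLinearMap₁₂ x (-ξ) = -(x ⬝ᵥ ξ) := (hL x (-ξ)).trans (dotProduct_neg _ _)
    simp only [hx, neg_neg, Circle.smul_def, e2pi_eq_fourierChar, smul_eq_mul]
    ring
  rw [hF] at h
  refine h.trans (le_of_eq ?_)
  have hone : ‖(Pi.single j 1 : Fin s → ℝ)‖ = 1 := by
    rw [Pi.norm_single, norm_one]
  rw [hone]
  simp

theorem exists_integral_norm_iteratedFDeriv_mul_le {W : (Fin s → ℝ) → ℂ}
    (hW : ContDiff ℝ (⊤ : ℕ∞) W) (hW_supp : HasCompactSupport W) (p : ℕ) :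
    ∃ B : ℝ, ∀ h, ∫ x, ‖iteratedFDeriv ℝ p (fun x => W x * W (x + h)) x‖ ≤ B := by
  have hc : ∀ i, Continuous (iteratedFDeriv ℝ i W) := fun i =>
    hW.continuous_iteratedFDeriv (by exact_mod_cast le_top)
  have hb : ∀ i, ∃ C, ∀ x, ‖iteratedFDeriv ℝ i W x‖ ≤ C := fun i =>
    (hc i).bounded_above_of_compact_support (hW_supp.iteratedFDeriv i)
  choose C hC using hb
  have hi : ∀ i, Integrable (fun x => ‖iteratedFDeriv ℝ i W x‖) := fun i =>
    ((hc i).integrable_of_hasCompactSupport (hW_supp.iteratedFDeriv i)).norm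
  refine ⟨∫ x, ∑ i ∈ Finset.range (p + 1),
    (p.choose i : ℝ) * ‖iteratedFDeriv ℝ i W x‖ * C (p - i), fun h => ?_⟩
  refine integral_mono_of_nonneg (.of_forall fun x => norm_nonneg _)
    (integrable_finsetSum _ fun i _ => ((hi i).const_mul _).mul_const _) (.of_forall fun x => ?_)
  have hW' : ContDiff ℝ (⊤ : ℕ∞) fun x => W (x + h) := hW.comp (contDiff_id.add contDiff_const)
  refine (norm_iteratedFDeriv_mul_le hW hW' x (n := p) (by exact_mod_cast le_top)).trans ?_
  refine Finset.sum_le_sum fun i _ => ?_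
  rw [iteratedFDeriv_comp_add_right]
  exact mul_le_mul_of_nonneg_left (hC _ _) (by positivity)

theorem exists_norm_integral_mul_translate_le {w : (Fin s → ℝ) → ℝ}
    (hw : ContDiff ℝ (⊤ : ℕ∞) w) (hw_supp : HasCompactSupport w) [NeZero s] :
    ∃ C : ℝ, 0 < C ∧ ∀ (h ξ : Fin s → ℝ) (k : Fin s),
      ‖∫ x, ((w x : ℂ) * w (x + h)) * e2pi (x ⬝ᵥ ξ)‖ ≤
        C * ((1 + h k ^ 2)⁻¹ * ∏ i, (1 + ξ i ^ 2)⁻¹) := by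
  set W : (Fin s → ℝ) → ℂ := fun x => (w x : ℂ) with hWdef
  have hW : ContDiff ℝ (⊤ : ℕ∞) W := Complex.ofRealCLM.contDiff.comp hw
  have hW_supp : HasCompactSupport W := hw_supp.comp_left (g := fun r : ℝ => (r : ℂ)) rfl
  choose B hB using exists_integral_norm_iteratedFDeriv_mul_le hW hW_supp
  have hGint : ∀ (n : ℕ) (h ξ : Fin s → ℝ) (j : Fin s),
      |ξ j| ^ n * ‖∫ x, (W x * W (x + h)) * e2pi (x ⬝ᵥ ξ)‖ ≤
        2 ^ n * ∑ p ∈ Finset.range (n + 1), B p := by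
    intro n h ξ j
    refine (pow_abs_mul_norm_integral_e2pi_le (hW.mul (hW.comp (contDiff_id.add contDiff_const)))
      hW_supp.mul_right n ξ j).trans ?_
    gcongr with p
    exact hB p h
  set A₀ : ℝ := 2 ^ 0 * ∑ p ∈ Finset.range (0 + 1), B p with hA₀
  set A₁ : ℝ := 2 ^ (2 * s) * ∑ p ∈ Finset.range (2 * s + 1), B p with hA₁
  have j₀ : Fin s := 0
  have hA₀0 : 0 ≤ A₀ := le_trans (by positivity) (hGint 0 0 0 j₀)
  have hA₁0 : 0 ≤ A₁ := le_trans (by positivity) (hGint (2 * s) 0 0 j₀)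
  obtain ⟨R, hR⟩ := hw_supp.isCompact.isBounded.exists_norm_le
  have hvan : ∀ (h ξ : Fin s → ℝ), 2 * R < ‖h‖ →
      ∫ x, (W x * W (x + h)) * e2pi (x ⬝ᵥ ξ) = 0 := by
    intro h ξ hh
    have : ∀ x, (W x * W (x + h)) * e2pi (x ⬝ᵥ ξ) = 0 := by
      intro x
      by_contra hne
      simp only [hWdef, mul_eq_zero, not_or, Complex.ofReal_eq_zero] at hne
      have h1 := hR _ (subset_tsupport _ hne.1.1)
      have h2 := hR _ (subset_tsupport _ hne.1.2)
      have h3 := norm_sub_le (x + h) x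
      rw [add_sub_cancel_left] at h3
      linarith
    simp [this]
  refine ⟨(1 + (2 * R) ^ 2) * (2 ^ s * (A₀ + A₁) + 1), by positivity, fun h ξ k => ?_⟩
  change ‖∫ x, (W x * W (x + h)) * e2pi (x ⬝ᵥ ξ)‖ ≤ _
  rcases lt_or_ge (2 * R) ‖h‖ with hh | hh
  · rw [hvan h ξ hh, norm_zero]
    positivity
  obtain ⟨j, hj⟩ := Finite.exists_max fun i => |ξ i|
  set I : ℝ := ‖∫ x, (W x * W (x + h)) * e2pi (x ⬝ᵥ ξ)‖ with hI
  have hI0 : 0 ≤ I := norm_nonneg _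
  have hprod : ∏ i, (1 + ξ i ^ 2) ≤ 2 ^ s * (1 + |ξ j| ^ (2 * s)) := by
    calc ∏ i, (1 + ξ i ^ 2) ≤ ∏ _i : Fin s, (1 + |ξ j| ^ 2) := by
          refine Finset.prod_le_prod (fun i _ => by positivity) fun i _ => ?_
          rw [← sq_abs (ξ i)]
          have := hj i
          gcongr
      _ = (1 + |ξ j| ^ 2) ^ s := by simp
      _ ≤ 2 ^ (s - 1) * (1 ^ s + (|ξ j| ^ 2) ^ s) := add_pow_le zero_le_one (by positivity) s
      _ ≤ 2 ^ s * (1 + |ξ j| ^ (2 * s)) := by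
          rw [one_pow, ← pow_mul]
          gcongr
          · norm_num
          · omega
  have hmain : (∏ i, (1 + ξ i ^ 2)) * I ≤ 2 ^ s * (A₀ + A₁) := by
    have h0 := hGint 0 h ξ j
    have h1 := hGint (2 * s) h ξ j
    rw [pow_zero, one_mul] at h0
    calc (∏ i, (1 + ξ i ^ 2)) * I ≤ (2 ^ s * (1 + |ξ j| ^ (2 * s))) * I := by gcongr
      _ = 2 ^ s * (I + |ξ j| ^ (2 * s) * I) := by ring
      _ ≤ 2 ^ s * (A₀ + A₁) := by gcongr
  have hk : 1 + h k ^ 2 ≤ 1 + (2 * R) ^ 2 := by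
    have := (norm_le_pi_norm h k).trans hh
    rw [Real.norm_eq_abs] at this
    rw [← sq_abs (h k)]
    gcongr
  rw [Finset.prod_inv_distrib, ← mul_inv, ← div_eq_mul_inv, le_div_iff₀ (by positivity)]
  calc I * ((1 + h k ^ 2) * ∏ i, (1 + ξ i ^ 2)) = (1 + h k ^ 2) * ((∏ i, (1 + ξ i ^ 2)) * I) := by
        ring
    _ ≤ (1 + (2 * R) ^ 2) * (2 ^ s * (A₀ + A₁) + 1) := by
        gcongr
        linarith

end Differencing

section Decay

variable {s : ℕ}

theorem Matrix.integrable_and_integral_comp_mulVec {A : Matrix (Fin s) (Fin s) ℝ} (hA : A.det ≠ 0)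
    {P : (Fin s → ℝ) → ℝ} (hP : Integrable P) :
    Integrable (fun h => P (A *ᵥ h)) ∧ |A.det| * ∫ h, P (A *ᵥ h) = ∫ y, P y := by
  have hmap := Real.map_matrix_volume_pi_eq_smul_volume_pi hA
  have hmeas : Measurable (Matrix.toLin' A) :=
    (LinearMap.continuous_of_finiteDimensional _).measurable
  have hPm : Integrable P (Measure.map (Matrix.toLin' A) volume) := by
    rw [hmap]
    exact hP.smul_measure ENNReal.ofReal_ne_top
  refine ⟨(integrable_map_measure hPm.1 hmeas.aemeasurable).mp hPm, ?_⟩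
  have h1 := integral_map hmeas.aemeasurable hPm.1
  simp only [Matrix.toLin'_apply] at h1
  rw [← h1, hmap, integral_smul_measure, ENNReal.toReal_ofReal (abs_nonneg _), smul_eq_mul,
    ← mul_assoc, ← abs_mul, mul_inv_cancel₀ hA, abs_one, one_mul]

theorem exists_abs_adjugate_mul_sq_norm_integral_le {w : (Fin s → ℝ) → ℝ}
    (hw : ContDiff ℝ (⊤ : ℕ∞) w) (hw_supp : HasCompactSupport w) [NeZero s] :
    ∃ C : ℝ, 0 < C ∧ ∀ M : Matrix (Fin s) (Fin s) ℝ, M.IsSymm → ∀ k l,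
      |M.adjugate k l| * ‖∫ x, (w x : ℂ) * e2pi (x ⬝ᵥ M *ᵥ x)‖ ^ 2 ≤ C := by
  obtain ⟨C, hC, hbound⟩ := exists_norm_integral_mul_translate_le hw hw_supp
  set P : (Fin s → ℝ) → ℝ := fun y => ∏ i, (1 + y i ^ 2)⁻¹ with hP
  have hPint : Integrable P := Integrable.fintype_prod fun _ => integrable_inv_one_add_sq
  have hP0 : ∀ y, 0 ≤ P y := fun y => Finset.prod_nonneg fun i _ => by positivity
  refine ⟨C * (∫ y, P y) + 1, add_pos_of_nonneg_of_pos
    (mul_nonneg hC.le (integral_nonneg hP0)) one_pos, fun M hM k l => ?_⟩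
  set A : Matrix (Fin s) (Fin s) ℝ := M.updateRow l (Pi.single k 1) with hA
  have hdet : A.det = M.adjugate k l := (Matrix.adjugate_apply M k l).symm
  rcases eq_or_ne (M.adjugate k l) 0 with h0 | h0
  · rw [h0, abs_zero, zero_mul]
    exact add_nonneg (mul_nonneg hC.le (integral_nonneg hP0)) zero_le_one
  have hAl : ∀ h, (A *ᵥ h) l = h k := fun h => by
    simp [hA, Matrix.mulVec, Matrix.updateRow_self]
  have hAi : ∀ h i, i ≠ l → (A *ᵥ h) i = (M *ᵥ h) i := fun h i hi => by
    simp [hA, Matrix.mulVec, Matrix.updateRow_ne hi]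
  have hle : ∀ h, (1 + h k ^ 2)⁻¹ * ∏ i, (1 + ((2 : ℝ) • M *ᵥ h) i ^ 2)⁻¹ ≤ P (A *ᵥ h) := by
    intro h
    simp only [hP]
    rw [← Finset.mul_prod_erase _ _ (Finset.mem_univ l),
      ← Finset.mul_prod_erase _ _ (Finset.mem_univ l), hAl]
    refine mul_le_mul_of_nonneg_left ?_ (by positivity)
    calc (1 + ((2 : ℝ) • M *ᵥ h) l ^ 2)⁻¹ *
          ∏ i ∈ Finset.univ.erase l, (1 + ((2 : ℝ) • M *ᵥ h) i ^ 2)⁻¹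
        ≤ 1 * ∏ i ∈ Finset.univ.erase l, (1 + ((2 : ℝ) • M *ᵥ h) i ^ 2)⁻¹ := by
          refine mul_le_mul_of_nonneg_right (inv_le_one_of_one_le₀ ?_)
            (Finset.prod_nonneg fun i _ => by positivity)
          nlinarith [sq_nonneg (((2 : ℝ) • M *ᵥ h) l)]
      _ ≤ ∏ i ∈ Finset.univ.erase l, (1 + (A *ᵥ h) i ^ 2)⁻¹ := by
          rw [one_mul]
          refine Finset.prod_le_prod (fun i _ => by positivity) fun i hi => ?_
          rw [hAi h i (Finset.ne_of_mem_erase hi), Pi.smul_apply, smul_eq_mul]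
          refine inv_anti₀ (by positivity) ?_
          nlinarith [sq_nonneg ((M *ᵥ h) i)]
  obtain ⟨hint, hval⟩ := Matrix.integrable_and_integral_comp_mulVec (hdet ▸ h0) hPint
  have hJ : ‖∫ x, (w x : ℂ) * e2pi (x ⬝ᵥ M *ᵥ x)‖ ^ 2 ≤ ∫ h, C * P (A *ᵥ h) := by
    refine (sq_norm_integral_quadratic_le hM hw.continuous hw_supp).trans ?_
    refine integral_mono_of_nonneg (.of_forall fun h => norm_nonneg _) (hint.const_mul C)
      (.of_forall fun h => ?_)
    exact (hbound h _ k).trans (mul_le_mul_of_nonneg_left (hle h) hC.le)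
  rw [integral_const_mul] at hJ
  calc |M.adjugate k l| * ‖∫ x, (w x : ℂ) * e2pi (x ⬝ᵥ M *ᵥ x)‖ ^ 2
      ≤ |M.adjugate k l| * (C * ∫ h, P (A *ᵥ h)) := by gcongr
    _ = C * ∫ y, P y := by
        rw [← hval, hdet]
        ring
    _ ≤ _ := by linarith

variable {M₁ M₂ : Matrix (Fin s) (Fin s) ℤ}

theorem NonsingularPair.exists_mul_norm_pow_le_sum_abs_adjugate (hns : NonsingularPair s M₁ M₂)
    (hM₁ : M₁.IsSymm) (hM₂ : M₂.IsSymm) [NeZero s] :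
    ∃ c : ℝ, 0 < c ∧ ∀ α : ℝ × ℝ, α ≠ 0 →
      c * ‖α‖ ^ (s - 1) ≤ ∑ k, ∑ l, |(pencil M₁ M₂ α.1 α.2).adjugate k l| := by
  set φ : ℝ × ℝ → ℝ := fun α => ∑ k, ∑ l, |(pencil M₁ M₂ α.1 α.2).adjugate k l| with hφ
  have hcont : Continuous φ := by
    have h1 : Continuous fun α : ℝ × ℝ => (pencil M₁ M₂ α.1 α.2).adjugate := by
      refine Continuous.matrix_adjugate ?_
      simp only [pencil]
      fun_prop
    refine continuous_finsetSum _ fun k _ => continuous_finsetSum _ fun l _ => ?_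
    exact (h1.matrix_elem k l).abs
  have hpos : ∀ α : ℝ × ℝ, α ≠ 0 → 0 < φ α := by
    intro α hα
    have hne : ((α.1 : ℂ)) ≠ 0 ∨ (α.2 : ℂ) ≠ 0 := by
      by_contra! hcon
      exact hα (Prod.ext (Complex.ofReal_eq_zero.mp hcon.1) (Complex.ofReal_eq_zero.mp hcon.2))
    have hadj := hns.pencil_adjugate_ne_zero hM₁ hM₂ hne
    by_contra! hle
    refine hadj (Matrix.ext fun k l => ?_)
    have h1 := pencil_adjugate_map (M₁ := M₁) (M₂ := M₂) Complex.ofRealHom α.1 α.2 k l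
    have h2 : |(pencil M₁ M₂ α.1 α.2).adjugate k l| ≤ φ α :=
      (Finset.single_le_sum (f := fun l => |(pencil M₁ M₂ α.1 α.2).adjugate k l|)
        (fun l _ => abs_nonneg _) (Finset.mem_univ l)).trans
      (Finset.single_le_sum (f := fun k => ∑ l, |(pencil M₁ M₂ α.1 α.2).adjugate k l|)
        (fun k _ => Finset.sum_nonneg fun l _ => abs_nonneg _) (Finset.mem_univ k))
    rw [abs_nonpos_iff.mp (h2.trans hle), map_zero] at h1
    exact h1.symm
  have hhom : ∀ (t : ℝ) (α : ℝ × ℝ), 0 ≤ t → φ (t • α) = t ^ (s - 1) * φ α := by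
    intro t α ht
    have h1 : pencil M₁ M₂ (t • α).1 (t • α).2 = t • pencil M₁ M₂ α.1 α.2 := by
      simp [pencil, smul_smul, smul_add]
    simp only [hφ, h1, Matrix.adjugate_smul, Fintype.card_fin, Matrix.smul_apply, smul_eq_mul,
      abs_mul, abs_pow, abs_of_nonneg ht, Finset.mul_sum]
  obtain ⟨β, hβ, hmin⟩ := (isCompact_sphere (0 : ℝ × ℝ) 1).exists_isMinOn
    (NormedSpace.sphere_nonempty.mpr zero_le_one) hcont.continuousOn
  have hβ0 : β ≠ 0 := by
    rintro rfl
    simp at hβ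
  refine ⟨φ β, hpos β hβ0, fun α hα => ?_⟩
  have hn : ‖α‖ ≠ 0 := norm_ne_zero_iff.mpr hα
  have hmem : ‖α‖⁻¹ • α ∈ Metric.sphere (0 : ℝ × ℝ) 1 := by
    rw [mem_sphere_zero_iff_norm, norm_smul, norm_inv, norm_norm, inv_mul_cancel₀ hn]
  have h1 : φ β ≤ φ (‖α‖⁻¹ • α) := hmin hmem
  have h2 := hhom ‖α‖ (‖α‖⁻¹ • α) (norm_nonneg _)
  rw [smul_inv_smul₀ hn] at h2
  change _ ≤ φ α
  rw [h2, mul_comm]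
  gcongr

theorem NonsingularPair.integrable_integral_mul_e2pi (hns : NonsingularPair s M₁ M₂)
    (hM₁ : M₁.IsSymm) (hM₂ : M₂.IsSymm) (hs : 6 ≤ s) {w : (Fin s → ℝ) → ℝ}
    (hw : ContDiff ℝ (⊤ : ℕ∞) w) (hw_supp : HasCompactSupport w) :
    Integrable (fun α : ℝ × ℝ => ∫ x : Fin s → ℝ, ((w x : ℝ) : ℂ) *
      e2pi (α.1 * quadEval M₁ x + α.2 * quadEval M₂ x)) := by
  have : NeZero s := ⟨by omega⟩
  set J : ℝ × ℝ → ℂ := fun α => ∫ x : Fin s → ℝ, ((w x : ℝ) : ℂ) *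
      e2pi (α.1 * quadEval M₁ x + α.2 * quadEval M₂ x) with hJ
  have hmeas : StronglyMeasurable J := by
    refine StronglyMeasurable.integral_prod_right (f := fun (α : ℝ × ℝ) (x : Fin s → ℝ) =>
      ((w x : ℝ) : ℂ) * e2pi (α.1 * quadEval M₁ x + α.2 * quadEval M₂ x))
      (Continuous.stronglyMeasurable ?_)
    have h1 := continuous_e2pi
    have h2 := hw.continuous
    simp only [Function.uncurry_def, quadEval]
    fun_prop
  obtain ⟨C, hC, hbound⟩ := exists_abs_adjugate_mul_sq_norm_integral_le hw hw_supp
  obtain ⟨c, hc, hadj⟩ := hns.exists_mul_norm_pow_le_sum_abs_adjugate hM₁ hM₂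
  set B : ℝ := ∫ x, ‖(w x : ℂ)‖ with hB
  have hJB : ∀ α, ‖J α‖ ≤ B := by
    intro α
    refine (norm_integral_le_integral_norm _).trans (le_of_eq ?_)
    simp only [norm_mul, norm_e2pi, mul_one, hB]
  have hJα : ∀ α : ℝ × ℝ, α ≠ 0 → c * ‖α‖ ^ (s - 1) * ‖J α‖ ^ 2 ≤ s * (s * C) := by
    intro α hα
    have h1 : J α = ∫ x, (w x : ℂ) * e2pi (x ⬝ᵥ pencil M₁ M₂ α.1 α.2 *ᵥ x) := by
      simp only [hJ, dotProduct_pencil_mulVec]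
    calc c * ‖α‖ ^ (s - 1) * ‖J α‖ ^ 2
        ≤ (∑ k, ∑ l, |(pencil M₁ M₂ α.1 α.2).adjugate k l|) * ‖J α‖ ^ 2 := by
          gcongr
          exact hadj α hα
      _ = ∑ k, ∑ l, |(pencil M₁ M₂ α.1 α.2).adjugate k l| * ‖J α‖ ^ 2 := by
          simp only [Finset.sum_mul]
      _ ≤ ∑ _k : Fin s, ∑ _l : Fin s, C := by
          refine Finset.sum_le_sum fun k _ => Finset.sum_le_sum fun l _ => ?_
          rw [h1]
          exact hbound _ (pencil_isSymm hM₁ hM₂ _ _) k l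
      _ = s * (s * C) := by simp
  have hdecay : ∀ α : ℝ × ℝ, ‖J α‖ ^ 2 ≤ 32 * (B ^ 2 + s * (s * C) / c) * (1 + ‖α‖) ^ (-5 : ℝ) := by
    intro α
    have hpow : (1 + ‖α‖) ^ (-5 : ℝ) = ((1 + ‖α‖) ^ 5)⁻¹ := by
      rw [Real.rpow_neg (by positivity)]
      norm_cast
    rw [hpow, ← div_eq_mul_inv, le_div_iff₀ (by positivity)]
    have hq : 0 ≤ s * (s * C) / c := by positivity
    rcases le_or_gt ‖α‖ 1 with h1 | h1
    · calc ‖J α‖ ^ 2 * (1 + ‖α‖) ^ 5 ≤ B ^ 2 * (1 + 1) ^ 5 := by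
            gcongr
            exact hJB α
        _ ≤ _ := by linarith
    · have hα : α ≠ 0 := norm_pos_iff.mp (zero_lt_one.trans h1)
      have h2 : ‖α‖ ^ (s - 1) * ‖J α‖ ^ 2 ≤ s * (s * C) / c := by
        rw [le_div_iff₀ hc]
        linarith [hJα α hα]
      calc ‖J α‖ ^ 2 * (1 + ‖α‖) ^ 5 ≤ ‖J α‖ ^ 2 * (2 * ‖α‖) ^ 5 := by
            gcongr
            linarith
        _ = 32 * (‖α‖ ^ 5 * ‖J α‖ ^ 2) := by ring
        _ ≤ 32 * (‖α‖ ^ (s - 1) * ‖J α‖ ^ 2) := by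
            gcongr
            · exact h1.le
            · omega
        _ ≤ 32 * (B ^ 2 + s * (s * C) / c) := by
            gcongr
            linarith [sq_nonneg B]
  have hint : Integrable (fun α : ℝ × ℝ => (1 + ‖α‖) ^ (-(5 / 2) : ℝ)) :=
    integrable_one_add_norm (by
      rw [Module.finrank_prod, Module.finrank_self]
      norm_num)
  refine (hint.const_mul √(32 * (B ^ 2 + s * (s * C) / c))).mono' hmeas.aestronglyMeasurable
    (.of_forall fun α => ?_)
  refine (Real.le_sqrt_of_sq_le (hdecay α)).trans (le_of_eq ?_)
  rw [Real.sqrt_mul (by positivity), Real.sqrt_eq_rpow ((1 + ‖α‖) ^ (-5 : ℝ)),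
    ← Real.rpow_mul (by positivity)]
  norm_num

end Decay

/-- absolute convergence of the singular series (`s ≥ 7`) and of the
singular integral (`s ≥ 6`). -/
theorem statement19 (s : ℕ) (M₁ M₂ : Matrix (Fin s) (Fin s) ℤ)
    (hM₁ : M₁.IsSymm) (hM₂ : M₂.IsSymm) (hns : NonsingularPair s M₁ M₂)
    (w : (Fin s → ℝ) → ℝ) (hw_smooth : ContDiff ℝ (⊤ : ℕ∞) w) (hw_supp : HasCompactSupport w) :
    (7 ≤ s →
      Summable (fun q : ℕ => (q : ℝ) ^ (-(s : ℤ)) * ‖Dq s M₁ M₂ q 0‖)) ∧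
    (6 ≤ s →
      Integrable (fun α : ℝ × ℝ =>
        ∫ x : Fin s → ℝ, ((w x : ℝ) : ℂ) *
          e2pi (α.1 * quadEval M₁ x + α.2 * quadEval M₂ x))) := by
  exact ⟨fun hs => hns.summable_norm_Dq_zero hM₁ hM₂ hs,
    fun hs => hns.integrable_integral_mul_e2pi hM₁ hM₂ hs hw_smooth hw_supp⟩
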